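/- Assuming the Riemann Hypothesis, for every complex number s with Re(s) > 1/2 such that s - 1 does not lie on the nonpositive real axis, the limit lim_{x → ∞} ( ∑_{p ≤ x, p prime} p^{-s} + E₁((s-1)·log x) ) exists, and it equals log ζ(s) − ∑_{n=2}^∞ (1/n) ∑_{p prime} p^{-ns}, thereby giving an analytic continuation of the prime zeta function P(s) = ∑_{p prime} p^{-s} to the half-plane Re(s) > 1/2 off the segment (1/2, 1]; here log ζ(s) denotes the branch of log ζ obtained by analytic continuation from the half-plane Re(s) > 1 along paths avoiding the zeros and pole of ζ, normalized so that log ζ(s) = ∑_{p,n} 1/(n p^{ns}) for Re(s) > 1. -/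

import Mathlib

/-!
Let `α ≥ 1/2` be such that `ζ` has no zeros in `Re z > α`. On that half-plane `(z - 1) ζ(z)` is
zero-free of polynomial growth, so by the Borel–Carathéodory theorem its logarithmic derivative is
`O(|z|^ε)`. The Mellin transform of `ψ(t) - t` averaged over a short multiplicative window then
decays fast enough for the inversion integral to be moved to `Re z` near `α`, and monotonicity
of `ψ` removes the average: `θ(t) - t = O(t^a)` for every `a > α`.

Partial summation against `θ` splits `∑_{p ≤ x} p^(-s)` into the contribution of the main term `t`,
which is `-E₁((s - 1) log x)` up to a constant depending analytically on `s`, and that of the error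
`θ(t) - t`, which converges to an analytic function on `Re s > α`. Since `E₁(y) → 0` as `y → ∞`, the
limit is the prime zeta function at real `s > 1`, and the identity theorem on the slit half-plane
does the rest.
-/

open Filter

/-- The exponential integral `E₁(z) = -γ - log z - ∑_{k=1}^∞ (-z)^k / (k·k!)`. -/
noncomputable def expIntegralE1 (z : ℂ) : ℂ :=
  -(Real.eulerMascheroniConstant : ℂ) - Complex.log z -
    ∑' k : ℕ, (-z) ^ (k + 1) / (((k + 1) * Nat.factorial (k + 1) : ℕ) : ℂ)

/-- The slit half-plane `{Re(s) > 1/2}` minus the segment `(1/2, 1]`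
(i.e. the points `s` with `s - 1` on the nonpositive real axis). -/
def slitRegion : Set ℂ :=
  {z : ℂ | 1 / 2 < z.re ∧ ¬∃ r : ℝ, r ≤ 0 ∧ z - 1 = (r : ℂ)}

section Mellin
open Topology MeasureTheory Set Asymptotics

section
variable {E : Type*} [NormedAddCommGroup E] {g : ℝ → E} {a b : ℝ} {s : ℂ}

lemma locallyIntegrableOn_ofReal {f : ℝ → ℝ} {u : Set ℝ} (hf : LocallyIntegrableOn f u) :
    LocallyIntegrableOn (fun t ↦ (f t : ℂ)) u := fun x hx ↦
  let ⟨v, hv, hfv⟩ := hf x hx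
  ⟨v, hv, hfv.ofReal⟩

lemma locallyIntegrableOn_indicator_Ioi (hg : LocallyIntegrableOn g (Ici a)) (u : Set ℝ)
    (hu : IsLocallyClosed u) : LocallyIntegrableOn (indicator (Ioi a) g) u := by
  refine (locallyIntegrableOn_iff hu).2 fun K _ hK ↦ ?_
  rw [IntegrableOn, integrable_indicator_iff measurableSet_Ioi, IntegrableOn,
    Measure.restrict_restrict measurableSet_Ioi]
  have : IntegrableOn g (Ici a ∩ K) :=
    hg.integrableOn_compact_subset inter_subset_left (hK.inter_left isClosed_Ici)
  exact this.mono_set (inter_subset_inter_left K Ioi_subset_Ici_self)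

lemma isBigO_atTop_indicator_Ioi {f : ℝ → ℝ} (hO : g =O[atTop] f) :
    indicator (Ioi a) g =O[atTop] f :=
  hO.congr' ((eventually_gt_atTop a).mono fun _ ht ↦ (indicator_of_mem (mem_Ioi.2 ht) g).symm)
    EventuallyEq.rfl

lemma isBigO_nhdsGT_zero_indicator_Ioi (ha : 0 < a) (g : ℝ → E) (f : ℝ → ℝ) :
    indicator (Ioi a) g =O[𝓝[>] 0] f := by
  refine (isBigO_zero f _).congr' ?_ EventuallyEq.rfl
  filter_upwards [mem_nhdsWithin_of_mem_nhds (Iio_mem_nhds ha)] with t ht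
  exact (indicator_of_notMem (notMem_Ioi.2 (le_of_lt ht)) g).symm

variable [NormedSpace ℂ E]

lemma mellin_indicator_Ioi (ha : 0 ≤ a) (g : ℝ → E) (s : ℂ) :
    mellin (indicator (Ioi a) g) s = ∫ t in Ioi a, (t : ℂ) ^ (s - 1) • g t := by
  have (t : ℝ) : (t : ℂ) ^ (s - 1) • indicator (Ioi a) g t =
      indicator (Ioi a) (fun t : ℝ ↦ (t : ℂ) ^ (s - 1) • g t) t :=
    (indicator_smul_apply (Ioi a) (fun t : ℝ ↦ (t : ℂ) ^ (s - 1)) g t).symm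
  simp_rw [mellin, this]
  rw [setIntegral_indicator measurableSet_Ioi, Ioi_inter_Ioi, max_eq_right ha]

lemma mellinConvergent_indicator_Ioi (ha : 0 < a) (hg : LocallyIntegrableOn g (Ici a))
    (hO : g =O[atTop] (· ^ b)) (hs : s.re < -b) : MellinConvergent (indicator (Ioi a) g) s :=
  mellinConvergent_of_isBigO_rpow (locallyIntegrableOn_indicator_Ioi hg _ isLocallyClosed_Ioi)
    (isBigO_atTop_indicator_Ioi (by simpa using hO)) hs
    (isBigO_nhdsGT_zero_indicator_Ioi ha _ _) (sub_one_lt s.re)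

lemma differentiableAt_mellin_indicator_Ioi (ha : 0 < a)
    (hg : LocallyIntegrableOn g (Ici a)) (hO : g =O[atTop] (· ^ b)) (hs : s.re < -b) :
    DifferentiableAt ℂ (mellin (indicator (Ioi a) g)) s :=
  mellin_differentiableAt_of_isBigO_rpow
    (locallyIntegrableOn_indicator_Ioi hg _ isLocallyClosed_Ioi)
    (isBigO_atTop_indicator_Ioi (by simpa using hO)) hs
    (isBigO_nhdsGT_zero_indicator_Ioi ha _ _) (sub_one_lt s.re)

lemma tendsto_intervalIntegral_cpow_smul_mellin (ha : 0 < a) (hg : LocallyIntegrableOn g (Ici a))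
    (hO : g =O[atTop] (· ^ b)) (hs : s.re < -b) :
    Tendsto (fun x ↦ ∫ t in a..x, (t : ℂ) ^ (s - 1) • g t) atTop
      (𝓝 (mellin (indicator (Ioi a) g) s)) := by
  rw [mellin_indicator_Ioi ha.le]
  refine intervalIntegral_tendsto_integral_Ioi a ?_ tendsto_id
  refine ((mellinConvergent_indicator_Ioi ha hg hO hs).mono_set
    (Ioi_subset_Ioi ha.le)).congr_fun (fun t ht ↦ ?_) measurableSet_Ioi
  simp only [indicator_of_mem ht]

end

lemma mellin_indicator_Ioi_one_ofReal {s : ℂ} (hs : s.re < -1) :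
    mellin (indicator (Ioi 1) fun t ↦ (t : ℂ)) s = -1 / (s + 1) := by
  rw [mellin_indicator_Ioi zero_le_one]
  have : ∫ t : ℝ in Ioi 1, (t : ℂ) ^ (s - 1) • (t : ℂ) = ∫ t : ℝ in Ioi 1, (t : ℂ) ^ s := by
    refine setIntegral_congr_fun measurableSet_Ioi fun t ht ↦ ?_
    have ht0 : (t : ℂ) ≠ 0 := Complex.ofReal_ne_zero.2 (zero_lt_one.trans ht).ne'
    simp [Complex.cpow_sub _ _ ht0, ht0]
  rw [this, integral_Ioi_cpow_of_lt hs one_pos]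
  simp

lemma isBigO_sum_Icc_floor {f : ℕ → ℝ}
    (hO : (fun n ↦ ∑ k ∈ Finset.Icc 1 n, f k) =O[atTop] fun n ↦ (n : ℝ) ^ (1 : ℝ)) :
    (fun t : ℝ ↦ ∑ k ∈ Finset.Icc 1 ⌊t⌋₊, f k) =O[atTop] fun t : ℝ ↦ t ^ (1 : ℝ) := by
  refine (hO.comp_tendsto tendsto_nat_floor_atTop).trans (IsBigO.of_bound' ?_)
  filter_upwards [eventually_ge_atTop 0] with t ht
  simpa [abs_of_nonneg ht] using Nat.floor_le ht

lemma monotone_sum_Icc_floor {f : ℕ → ℝ} (hf : ∀ n, 0 ≤ f n) :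
    Monotone fun t : ℝ ↦ ∑ k ∈ Finset.Icc 1 ⌊t⌋₊, f k := fun _ _ h ↦
  Finset.sum_le_sum_of_subset_of_nonneg (Finset.Icc_subset_Icc_right (Nat.floor_mono h))
    fun _ _ _ ↦ hf _

/- Splitting off the main term `t` of the summatory function isolates the pole at `1`. -/
lemma LSeries_eq_div_add_mul_mellin {f : ℕ → ℝ} (hf : ∀ n, 0 ≤ f n)
    (hO : (fun n ↦ ∑ k ∈ Finset.Icc 1 n, f k) =O[atTop] fun n ↦ (n : ℝ) ^ (1 : ℝ))
    {s : ℂ} (hs : 1 < s.re) :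
    LSeries (fun n ↦ f n) s = s / (s - 1) + s *
      mellin (indicator (Ioi 1) fun t ↦ ((∑ k ∈ Finset.Icc 1 ⌊t⌋₊, f k - t : ℝ) : ℂ)) (-s) := by
  have hsum : MellinConvergent (indicator (Ioi 1)
      fun t : ℝ ↦ ((∑ k ∈ Finset.Icc 1 ⌊t⌋₊, f k : ℝ) : ℂ)) (-s) := by
    refine mellinConvergent_indicator_Ioi (b := 1) one_pos ?_ ?_ (by simpa)
    · exact locallyIntegrableOn_ofReal
        ((monotone_sum_Icc_floor hf).locallyIntegrable.locallyIntegrableOn _)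
    · exact Complex.isBigO_ofReal_left.2 (isBigO_sum_Icc_floor hO)
  have hid : MellinConvergent (indicator (Ioi 1) fun t : ℝ ↦ (t : ℂ)) (-s) := by
    refine mellinConvergent_indicator_Ioi (b := 1) one_pos ?_ ?_ (by simpa)
    · exact Complex.continuous_ofReal.locallyIntegrable.locallyIntegrableOn _
    · exact Complex.isBigO_ofReal_left.2 (by simpa using isBigO_refl _ _)
  have hsplit : indicator (Ioi 1) (fun t ↦ ((∑ k ∈ Finset.Icc 1 ⌊t⌋₊, f k - t : ℝ) : ℂ)) =
      fun t ↦ indicator (Ioi 1) (fun t : ℝ ↦ ((∑ k ∈ Finset.Icc 1 ⌊t⌋₊, f k : ℝ) : ℂ)) t -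
        indicator (Ioi 1) (fun t : ℝ ↦ (t : ℂ)) t := by
    ext t
    by_cases ht : t ∈ Ioi (1 : ℝ) <;> simp [ht]
  have hs1 : s - 1 ≠ 0 := sub_ne_zero.2 fun h ↦ by simp [h] at hs
  have hs1' : -s + 1 ≠ 0 := fun h ↦ hs1 (by linear_combination -h)
  have hL := LSeries_eq_mul_integral_of_nonneg f zero_le_one hs hO hf
  have hint : ∫ t in Ioi (1 : ℝ), (∑ k ∈ Finset.Icc 1 ⌊t⌋₊, (f k : ℂ)) * (t : ℂ) ^ (-(s + 1)) =
      mellin (indicator (Ioi 1) fun t : ℝ ↦ ((∑ k ∈ Finset.Icc 1 ⌊t⌋₊, f k : ℝ) : ℂ)) (-s) := by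
    rw [mellin_indicator_Ioi zero_le_one]
    simp [mul_comm, neg_add', -neg_add_rev]
  rw [hL, hint, hsplit, (hasMellin_sub hsum hid).2, mellin_indicator_Ioi_one_ofReal (by simpa)]
  field_simp
  ring

end Mellin

section Zeta
open Topology MeasureTheory Set Asymptotics

lemma norm_mellin_indicator_Ioi_one_le {E : Type*} [NormedAddCommGroup E] [NormedSpace ℂ E]
    {g : ℝ → E} {C : ℝ} (hg : ∀ t, 1 < t → ‖g t‖ ≤ C) {s : ℂ} (hs : s.re < 0) :
    ‖mellin (indicator (Ioi 1) g) s‖ ≤ C / -s.re := by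
  rw [mellin_indicator_Ioi zero_le_one]
  have hre : s.re - 1 < -1 := by linarith
  calc ‖∫ t : ℝ in Ioi 1, (t : ℂ) ^ (s - 1) • g t‖
      ≤ ∫ t in Ioi (1 : ℝ), C * t ^ (s.re - 1) := by
        refine norm_integral_le_of_norm_le
          ((integrableOn_Ioi_rpow_of_lt hre one_pos).const_mul C) ?_
        filter_upwards [ae_restrict_mem measurableSet_Ioi] with t ht
        rw [norm_smul, Complex.norm_cpow_eq_rpow_re_of_pos (zero_lt_one.trans ht), mul_comm,
          Complex.sub_re, Complex.one_re]
        exact mul_le_mul_of_nonneg_right (hg t ht) (Real.rpow_nonneg (zero_lt_one.trans ht).le _)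
    _ = C / -s.re := by
        rw [integral_const_mul, integral_Ioi_rpow_of_lt hre one_pos]
        rw [Real.one_rpow, sub_add_cancel, neg_div, ← div_neg, mul_one_div]

lemma riemannZeta₁_eq_sub_one_mul {s : ℂ} (hs : s ≠ 1) :
    riemannZeta₁ s = (s - 1) * riemannZeta s := by
  rw [riemannZeta_eq_inv_sub_mul hs, mul_inv_cancel_left₀ (sub_ne_zero.2 hs)]

lemma riemannZeta₁_eq_sub_mul_mellin_fract_of_one_lt_re {s : ℂ} (hs : 1 < s.re) :
    riemannZeta₁ s =
      s - s * (s - 1) * mellin (indicator (Ioi 1) fun t : ℝ ↦ ((Int.fract t : ℝ) : ℂ)) (-s) := by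
  have hs1 : s ≠ 1 := fun h ↦ by simp [h] at hs
  have hL := LSeries_eq_div_add_mul_mellin (f := 1) (fun _ ↦ zero_le_one)
    (by simpa using isBigO_refl _ _) hs
  have hfract : indicator (Ioi 1)
        (fun t : ℝ ↦ ((∑ k ∈ Finset.Icc 1 ⌊t⌋₊, (1 : ℕ → ℝ) k - t : ℝ) : ℂ)) =
      fun t ↦ (-1 : ℂ) • indicator (Ioi 1) (fun t : ℝ ↦ ((Int.fract t : ℝ) : ℂ)) t := by
    ext t
    by_cases ht : t ∈ Ioi (1 : ℝ)
    · have : (⌊t⌋₊ : ℝ) - t = -Int.fract t := by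
        rw [natCast_floor_eq_intCast_floor (zero_le_one.trans (le_of_lt ht)), Int.fract]
        ring
      simpa [ht] using congrArg Complex.ofReal this
    · simp [ht]
  have hone : LSeries (fun n ↦ ((1 : ℕ → ℝ) n : ℂ)) s = riemannZeta s := by
    simpa [Pi.one_def] using LSeries_one_eq_riemannZeta hs
  rw [hone, hfract, mellin_const_smul] at hL
  rw [riemannZeta₁_eq_sub_one_mul hs1, hL, smul_eq_mul]
  field_simp [sub_ne_zero.2 hs1]
  ring

lemma locallyIntegrable_fract : LocallyIntegrable (fun t : ℝ ↦ ((Int.fract t : ℝ) : ℂ)) := by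
  refine (locallyIntegrable_const (1 : ℝ)).mono ?_ (Eventually.of_forall fun t ↦ ?_)
  · exact (Complex.measurable_ofReal.comp measurable_fract).aestronglyMeasurable
  · simpa [abs_of_nonneg] using (Int.fract_lt_one t).le

lemma differentiableAt_mellin_fract_neg {s : ℂ} (hs : 0 < s.re) : DifferentiableAt ℂ
    (fun s ↦ mellin (indicator (Ioi 1) fun t : ℝ ↦ ((Int.fract t : ℝ) : ℂ)) (-s)) s := by
  have hO : (fun t : ℝ ↦ ((Int.fract t : ℝ) : ℂ)) =O[atTop] (· ^ (0 : ℝ)) :=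
    IsBigO.of_bound 1 (Eventually.of_forall fun t ↦ by
      simpa [abs_of_nonneg] using (Int.fract_lt_one t).le)
  exact (differentiableAt_mellin_indicator_Ioi one_pos
    (locallyIntegrable_fract.locallyIntegrableOn _) hO (by simpa)).comp s
      differentiableAt_id.neg

lemma riemannZeta₁_eq_sub_mul_mellin_fract {s : ℂ} (hs : 0 < s.re) :
    riemannZeta₁ s =
      s - s * (s - 1) * mellin (indicator (Ioi 1) fun t : ℝ ↦ ((Int.fract t : ℝ) : ℂ)) (-s) := by
  have hopen : IsOpen {z : ℂ | 0 < z.re} := isOpen_lt continuous_const Complex.continuous_re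
  have hzeta : AnalyticOnNhd ℂ riemannZeta₁ {z : ℂ | 0 < z.re} :=
    differentiable_riemannZeta₁.differentiableOn.analyticOnNhd hopen
  have hmellin : AnalyticOnNhd ℂ (fun s ↦ s - s * (s - 1) *
      mellin (indicator (Ioi 1) fun t : ℝ ↦ ((Int.fract t : ℝ) : ℂ)) (-s)) {z : ℂ | 0 < z.re} := by
    refine DifferentiableOn.analyticOnNhd (fun z hz ↦ ?_) hopen
    exact (differentiableAt_id.sub ((differentiableAt_id.mul
      (differentiableAt_id.sub_const 1)).mul
        (differentiableAt_mellin_fract_neg hz))).differentiableWithinAt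
  refine hzeta.eqOn_of_preconnected_of_eventuallyEq hmellin
    (convex_halfSpace_re_gt 0).isPreconnected (z₀ := 2) (by simp) ?_ hs
  filter_upwards [(isOpen_lt continuous_const Complex.continuous_re).mem_nhds
    (show (1 : ℝ) < (2 : ℂ).re by simp)] with z hz
  exact riemannZeta₁_eq_sub_mul_mellin_fract_of_one_lt_re hz

lemma norm_riemannZeta₁_le {s : ℂ} (hs : 0 < s.re) :
    ‖riemannZeta₁ s‖ ≤ ‖s‖ + ‖s‖ * ‖s - 1‖ / s.re := by
  have hmellin := norm_mellin_indicator_Ioi_one_le (g := fun t ↦ ((Int.fract t : ℝ) : ℂ)) (C := 1)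
    (s := -s) (fun t _ ↦ by simpa [abs_of_nonneg] using (Int.fract_lt_one t).le) (by simpa)
  rw [riemannZeta₁_eq_sub_mul_mellin_fract hs]
  refine (norm_sub_le _ _).trans ?_
  rw [norm_mul, norm_mul, div_eq_mul_inv]
  gcongr
  simpa using hmellin

lemma one_third_le_norm_riemannZeta {s : ℂ} (hs : 2 ≤ s.re) : 1 / 3 ≤ ‖riemannZeta s‖ := by
  have hzeta : riemannZeta s - 1 = ∑' n : ℕ, 1 / ((n + 1 : ℕ) + 1 : ℂ) ^ s := by
    rw [zeta_eq_tsum_one_div_nat_add_one_cpow (by linarith), Summable.tsum_eq_zero_add]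
    · simp
    · simpa using (summable_nat_add_iff 1).2 (Complex.summable_one_div_nat_cpow.2 (by linarith))
  have hsq : HasSum (fun n : ℕ ↦ 1 / ((n + 1 : ℕ) + 1 : ℝ) ^ 2) (Real.pi ^ 2 / 6 - 1) := by
    simpa [Finset.sum_range_succ, add_assoc, one_add_one_eq_two] using
      (hasSum_nat_add_iff' 2).2 hasSum_zeta_two
  have hle : ‖riemannZeta s - 1‖ ≤ Real.pi ^ 2 / 6 - 1 := by
    refine hzeta ▸ tsum_of_norm_bounded hsq fun n ↦ ?_
    have hn : ((n + 1 : ℕ) + 1 : ℂ) = ((n + 2 : ℕ) : ℂ) := by push_cast; ring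
    rw [hn, norm_div, norm_one, Complex.norm_natCast_cpow_of_pos (by simp), ← Real.rpow_natCast]
    have : ((n + 1 : ℕ) + 1 : ℝ) = ((n + 2 : ℕ) : ℝ) := by push_cast; ring
    rw [this]
    gcongr
    · exact_mod_cast (by omega : 1 ≤ n + 2)
    · exact_mod_cast hs
  have hpi : Real.pi ^ 2 ≤ 10 := by nlinarith [Real.pi_lt_d2, Real.pi_pos]
  have := norm_sub_norm_le 1 (1 - riemannZeta s)
  rw [norm_one, sub_sub_cancel, norm_sub_rev] at this
  linarith

lemma one_third_le_norm_riemannZeta₁ {s : ℂ} (hs : 2 ≤ s.re) : 1 / 3 ≤ ‖riemannZeta₁ s‖ := by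
  have hs1 : s ≠ 1 := fun h ↦ by norm_num [h] at hs
  have hsub : 1 ≤ ‖s - 1‖ := by
    have := Complex.re_le_norm (s - 1)
    rw [Complex.sub_re, Complex.one_re] at this
    linarith
  rw [riemannZeta₁_eq_sub_one_mul hs1, norm_mul]
  exact (one_third_le_norm_riemannZeta hs).trans (le_mul_of_one_le_left (norm_nonneg _) hsub)

end Zeta

section LogDeriv
open Topology Set Metric

lemma exists_eq_mul_exp_on_ball {f : ℂ → ℂ} {c : ℂ} {R : ℝ} (hR : 0 < R)
    (hf : DifferentiableOn ℂ f (ball c R)) (hne : ∀ z ∈ ball c R, f z ≠ 0) :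
    ∃ g : ℂ → ℂ, g c = 0 ∧ (∀ z ∈ ball c R, HasDerivAt g (logDeriv f z) z) ∧
      ∀ z ∈ ball c R, f z = f c * Complex.exp (g z) := by
  obtain ⟨g, hg0, hg⟩ := ((hf.deriv isOpen_ball).div hf hne).isExactOn_ball.with_val_at c 0
  have hquot : ∀ z ∈ ball c R, HasDerivAt (fun z ↦ f z * Complex.exp (-g z)) 0 z := by
    intro z hz
    have hfz := (hf.differentiableAt (isOpen_ball.mem_nhds hz)).hasDerivAt
    refine (hfz.mul (hg z hz).neg.cexp).congr_deriv ?_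
    have := div_mul_cancel₀ (deriv f z) (hne z hz)
    simp only [Pi.div_apply, Pi.neg_apply]
    linear_combination -Complex.exp (-g z) * this
  refine ⟨g, hg0, hg, fun z hz ↦ ?_⟩
  have hconst := isOpen_ball.is_const_of_deriv_eq_zero (convex_ball c R).isPreconnected
    (fun w hw ↦ (hquot w hw).differentiableAt.differentiableWithinAt)
    (fun w hw ↦ (hquot w hw).deriv) hz (mem_ball_self hR)
  simp only [hg0, neg_zero, Complex.exp_zero, mul_one] at hconst
  rw [← hconst, mul_assoc, ← Complex.exp_add, neg_add_cancel, Complex.exp_zero, mul_one]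

/- Borel–Carathéodory bounds the logarithm of `f` on an intermediate disc by the bound for its real
part, and Cauchy's estimate passes to the derivative. -/
lemma norm_logDeriv_le_of_norm_le_exp_mul {f : ℂ → ℂ} {c z : ℂ} {r R M : ℝ} (hrR : r < R)
    (hM : 0 < M) (hf : DifferentiableOn ℂ f (ball c R)) (hne : ∀ z ∈ ball c R, f z ≠ 0)
    (hfM : ∀ z ∈ ball c R, ‖f z‖ ≤ Real.exp M * ‖f c‖) (hz : z ∈ closedBall c r) :
    ‖logDeriv f z‖ ≤ 4 * (r + R) / (R - r) ^ 2 * M := by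
  have hr : 0 ≤ r := dist_nonneg.trans hz
  have hR : 0 < R := hr.trans_lt hrR
  obtain ⟨g, hg0, hg, hfg⟩ := exists_eq_mul_exp_on_ball hR hf hne
  have hre : ∀ w ∈ ball c R, (g w).re ≤ M := fun w hw ↦ by
    have := hfM w hw
    rw [hfg w hw, norm_mul, Complex.norm_exp, mul_comm] at this
    exact Real.exp_le_exp.1
      (le_of_mul_le_mul_right this (norm_pos_iff.2 (hne c (mem_ball_self hR))))
  have hgbound : ∀ w ∈ closedBall c ((r + R) / 2),
      ‖g w‖ ≤ 2 * M * ((r + R) / 2) / (R - (r + R) / 2) := by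
    intro w hw
    have hwR : ‖w - c‖ < R := by linarith [mem_closedBall_iff_norm.1 hw]
    have hshift : ∀ u ∈ ball (0 : ℂ) R, c + u ∈ ball c R := fun u hu ↦ by simpa using hu
    have := Complex.borelCaratheodory_zero (f := fun u ↦ g (c + u)) (z := w - c) hM
      (fun u hu ↦ ((hg _ (hshift u hu)).comp_const_add c u).differentiableAt.differentiableWithinAt)
      (fun u hu ↦ hre _ (hshift u hu)) hR (by simpa using hwR) (by simpa using hg0)
    rw [add_sub_cancel] at this
    refine this.trans ?_
    have hw' := mem_closedBall_iff_norm.1 hw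
    gcongr
    linarith
  have hsub : closedBall z ((R - r) / 2) ⊆ closedBall c ((r + R) / 2) :=
    closedBall_subset_closedBall' (by linarith [mem_closedBall.1 hz])
  have hsub' : closedBall c ((r + R) / 2) ⊆ ball c R := closedBall_subset_ball (by linarith)
  have hdiff : DiffContOnCl ℂ g (ball z ((R - r) / 2)) :=
    DifferentiableOn.diffContOnCl fun w hw ↦
      (hg w (hsub' (hsub (closure_ball_subset_closedBall hw)))).differentiableAt
        |>.differentiableWithinAt
  have hcauchy := Complex.norm_deriv_le_of_forall_mem_sphere_norm_le (by linarith) hdiff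
    fun w hw ↦ hgbound w (hsub (sphere_subset_closedBall hw))
  rw [(hg z (closedBall_subset_ball hrR hz)).deriv] at hcauchy
  refine hcauchy.trans_eq ?_
  have : R - r ≠ 0 := by linarith
  rw [show R - (r + R) / 2 = (R - r) / 2 by ring]
  field_simp
  norm_num

lemma re_sub_lt_re_of_mem_ball {c z : ℂ} {r : ℝ} (hz : z ∈ ball c r) : c.re - r < z.re := by
  have := (Complex.abs_re_le_norm (z - c)).trans_lt (mem_ball_iff_norm.1 hz)
  rw [Complex.sub_re] at this
  linarith [(abs_lt.1 this).1]

lemma norm_sub_le_abs_im_add_four {c z w : ℂ} {r : ℝ} (hr : r ≤ 2) (hz : z ∈ ball c r)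
    (hw : ‖(c.re : ℂ) - w‖ ≤ 2) : ‖z - w‖ ≤ |c.im| + 4 :=
  calc ‖z - w‖ = ‖(z - c) + (c.re - w) + c.im * Complex.I‖ := by
        congr 1
        linear_combination (Complex.re_add_im c).symm
    _ ≤ ‖z - c‖ + ‖(c.re : ℂ) - w‖ + ‖(c.im : ℂ) * Complex.I‖ := norm_add₃_le
    _ ≤ |c.im| + 4 := by
      have : ‖(c.im : ℂ) * Complex.I‖ = |c.im| := by simp
      linarith [mem_ball_iff_norm.1 hz]

variable {α σ : ℝ}

lemma norm_riemannZeta₁_le_mul_sq (hσ : 0 < σ) {s : ℂ} (hs : σ ≤ s.re) {y : ℝ} (hy : 1 ≤ y)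
    (hsy : ‖s‖ ≤ y) (hsy' : ‖s - 1‖ ≤ y) : ‖riemannZeta₁ s‖ ≤ (1 + 1 / σ) * y ^ 2 :=
  calc ‖riemannZeta₁ s‖ ≤ ‖s‖ + ‖s‖ * ‖s - 1‖ / s.re := norm_riemannZeta₁_le (hσ.trans_le hs)
    _ ≤ y + y * y / σ := by gcongr
    _ ≤ y ^ 2 + y ^ 2 / σ := by
      rw [← sq]
      gcongr
      exact le_self_pow₀ hy two_ne_zero
    _ = (1 + 1 / σ) * y ^ 2 := by ring

/- The disc about `2 + it` reaching `re z = σ` is contained in the larger one reaching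
`re z = (α + σ) / 2`, on which `ζ₁` is zero-free and polynomially bounded. -/
lemma norm_logDeriv_riemannZeta₁_le_log (hα : 0 ≤ α) (hασ : α < σ) (hσ : σ < 2)
    (hζ : ∀ z : ℂ, α < z.re → riemannZeta₁ z ≠ 0) {s : ℂ} (hs : σ ≤ s.re) (hs' : s.re ≤ 2) :
    ‖logDeriv riemannZeta₁ s‖ ≤ 4 * ((2 - σ) + (2 - (α + σ) / 2)) / ((σ - α) / 2) ^ 2 *
      Real.log (3 * (1 + 1 / ((α + σ) / 2)) * (|s.im| + 4) ^ 2) := by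
  set ρ := (α + σ) / 2 with hρ
  set y := |s.im| + 4 with hy
  set c : ℂ := 2 + s.im * Complex.I with hc
  have hρ0 : 0 < ρ := by linarith
  have hy4 : 4 ≤ y := by linarith [abs_nonneg s.im, hy]
  have hre : ∀ z ∈ ball c (2 - ρ), ρ < z.re := fun z hz ↦ by
    simpa [hc] using re_sub_lt_re_of_mem_ball hz
  have hnorm : ∀ w : ℂ, ∀ z ∈ ball c (2 - ρ), ‖2 - w‖ ≤ 2 → ‖z - w‖ ≤ y := fun w z hz hw ↦ by
    simpa [hc] using norm_sub_le_abs_im_add_four (by linarith) hz (w := w) (by simpa [hc] using hw)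
  have hK : 1 < 3 * (1 + 1 / ρ) * y ^ 2 := by
    have : 0 < 1 / ρ := by positivity
    nlinarith
  have hrR : 2 - σ < 2 - ρ := by linarith
  have hmem : s ∈ closedBall c (2 - σ) := by
    have : s - c = ((s.re - 2 : ℝ) : ℂ) := by apply Complex.ext <;> simp [hc]
    rw [mem_closedBall_iff_norm, this, Complex.norm_real, Real.norm_eq_abs, abs_le]
    constructor <;> linarith
  convert norm_logDeriv_le_of_norm_le_exp_mul hrR (Real.log_pos hK)
    differentiable_riemannZeta₁.differentiableOn (fun z hz ↦ hζ z (by linarith [hre z hz]))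
    (fun z hz ↦ ?_) hmem using 3
  · ring
  · rw [Real.exp_log (by linarith)]
    have hcenter : 1 / 3 ≤ ‖riemannZeta₁ c‖ := one_third_le_norm_riemannZeta₁ (by simp [hc])
    calc ‖riemannZeta₁ z‖ ≤ (1 + 1 / ρ) * y ^ 2 := by
          refine norm_riemannZeta₁_le_mul_sq hρ0 (hre z hz).le (by linarith) ?_ ?_
          · simpa using hnorm 0 z hz (by simp)
          · exact hnorm 1 z hz (by norm_num)
      _ = 3 * (1 + 1 / ρ) * y ^ 2 * (1 / 3) := by ring
      _ ≤ _ := by gcongr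

lemma exists_norm_logDeriv_riemannZeta₁_le_rpow (hα : 0 ≤ α) (hασ : α < σ) (hσ : σ < 2)
    (hζ : ∀ z : ℂ, α < z.re → riemannZeta₁ z ≠ 0) {ε : ℝ} (hε : 0 < ε) :
    ∃ C : ℝ, ∀ s : ℂ, σ ≤ s.re → s.re ≤ 2 → ‖logDeriv riemannZeta₁ s‖ ≤ C * ‖s‖ ^ ε := by
  set K := 4 * ((2 - σ) + (2 - (α + σ) / 2)) / ((σ - α) / 2) ^ 2
  have hK0 : 0 ≤ K := div_nonneg (by linarith) (sq_nonneg _)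
  set A := 3 * (1 + 1 / ((α + σ) / 2)) with hA
  have hA1 : 1 ≤ A := by
    have : 0 < 1 / ((α + σ) / 2) := one_div_pos.2 (by linarith)
    linarith
  have hσ0 : 0 < σ := hα.trans_lt hασ
  refine ⟨K * ((Real.log A + 2 / ε) * (1 + 4 / σ) ^ ε), fun s hs hs' ↦
    (norm_logDeriv_riemannZeta₁_le_log hα hασ hσ hζ hs hs').trans ?_⟩
  rw [mul_assoc K]
  refine mul_le_mul_of_nonneg_left ?_ hK0
  set y := |s.im| + 4 with hy
  have hy4 : 4 ≤ y := by linarith [abs_nonneg s.im, hy]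
  have hys : y ≤ (1 + 4 / σ) * ‖s‖ := by
    have hσs : σ ≤ ‖s‖ := hs.trans (Complex.re_le_norm s)
    have : 4 ≤ 4 / σ * ‖s‖ := by
      rw [div_mul_eq_mul_div, le_div_iff₀ hσ0]
      gcongr
    linarith [Complex.abs_im_le_norm s]
  calc Real.log (A * y ^ 2) = Real.log A + 2 * Real.log y := by
        rw [Real.log_mul (by positivity) (by positivity), Real.log_pow]
        norm_num
    _ ≤ Real.log A * y ^ ε + 2 * (y ^ ε / ε) := by
        gcongr
        · exact le_mul_of_one_le_right (Real.log_nonneg hA1)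
            (Real.one_le_rpow (by linarith) hε.le)
        · exact Real.log_le_rpow_div (by linarith) hε
    _ = (Real.log A + 2 / ε) * y ^ ε := by ring
    _ ≤ (Real.log A + 2 / ε) * ((1 + 4 / σ) * ‖s‖) ^ ε := by
        have := Real.log_nonneg hA1
        gcongr
    _ = (Real.log A + 2 / ε) * (1 + 4 / σ) ^ ε * ‖s‖ ^ ε := by
        rw [Real.mul_rpow (by positivity) (norm_nonneg s), mul_assoc]

end LogDeriv

section MellinAverage
open Topology MeasureTheory Set

section
variable {E : Type*} [NormedAddCommGroup E] {f : ℝ → E} {a b x : ℝ} {s : ℂ}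

lemma continuousAt_intervalIntegral_comp_mul [NormedSpace ℝ E]
    (hf : ∀ c d : ℝ, IntervalIntegrable f volume c d) (hx : x ≠ 0) :
    ContinuousAt (fun x ↦ ∫ u in a..b, f (x * u)) x := by
  have hprim : Continuous fun y ↦ ∫ u in (0 : ℝ)..y, f u :=
    intervalIntegral.continuous_primitive hf 0
  have hcont : ContinuousAt (fun x ↦ x⁻¹ • ((∫ u in (0 : ℝ)..x * b, f u) -
      ∫ u in (0 : ℝ)..x * a, f u)) x :=
    (continuousAt_inv₀ hx).smul ((hprim.comp (by fun_prop)).sub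
      (hprim.comp (by fun_prop))).continuousAt
  refine hcont.congr ?_
  filter_upwards [isOpen_ne.mem_nhds hx] with y hy
  rw [intervalIntegral.integral_comp_mul_left _ hy,
    intervalIntegral.integral_interval_sub_left (hf _ _) (hf _ _)]

variable [NormedSpace ℂ E]

lemma norm_cpow_smul_comp_mul_right {t u : ℝ} (ht : 0 < t) (hu : 0 < u) :
    ‖(t : ℂ) ^ (s - 1) • f (t * u)‖ =
      u ^ (1 - s.re) * ‖((u * t : ℝ) : ℂ) ^ (s - 1) • f (u * t)‖ := by
  have hexp : u ^ (1 - s.re) * u ^ (s.re - 1) = 1 := by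
    rw [← Real.rpow_add hu, sub_add_sub_cancel', sub_self, Real.rpow_zero]
  simp only [norm_smul, Complex.norm_cpow_eq_rpow_re_of_pos ht,
    Complex.norm_cpow_eq_rpow_re_of_pos (mul_pos hu ht), Real.mul_rpow hu.le ht.le,
    Complex.sub_re, Complex.one_re, mul_comm t u]
  linear_combination -(t ^ (s.re - 1) * ‖f (u * t)‖) * hexp

lemma integral_norm_cpow_smul_comp_mul_right {u : ℝ} (hu : 0 < u) :
    ∫ t in Ioi (0 : ℝ), ‖(t : ℂ) ^ (s - 1) • f (t * u)‖ =
      u ^ (-s.re) * ∫ t in Ioi (0 : ℝ), ‖(t : ℂ) ^ (s - 1) • f t‖ := by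
  rw [setIntegral_congr_fun measurableSet_Ioi fun t ht ↦ norm_cpow_smul_comp_mul_right ht hu,
    integral_const_mul,
    integral_comp_mul_left_Ioi (fun t : ℝ ↦ ‖(t : ℂ) ^ (s - 1) • f t‖) 0 hu, mul_zero, smul_eq_mul,
    ← mul_assoc, ← Real.rpow_neg_one, ← Real.rpow_add hu]
  ring_nf

lemma integrable_cpow_smul_comp_mul (hfm : StronglyMeasurable f) (hf : MellinConvergent f s)
    (ha : 0 < a) : Integrable (fun p : ℝ × ℝ ↦ (p.1 : ℂ) ^ (s - 1) • f (p.1 * p.2))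
      ((volume.restrict (Ioi 0)).prod (volume.restrict (Ioc a b))) := by
  have hmeas : AEStronglyMeasurable (fun p : ℝ × ℝ ↦ (p.1 : ℂ) ^ (s - 1) • f (p.1 * p.2))
      ((volume.restrict (Ioi 0)).prod (volume.restrict (Ioc a b))) :=
    (((Complex.measurable_ofReal.comp measurable_fst).pow_const _).stronglyMeasurable.smul
      (hfm.comp_measurable (measurable_fst.mul measurable_snd))).aestronglyMeasurable
  refine (integrable_prod_iff' hmeas).2 ⟨?_, ?_⟩
  · filter_upwards [ae_restrict_mem measurableSet_Ioc] with u hu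
    have := (MellinConvergent.comp_mul_left (ha.trans hu.1)).2 hf
    simpa only [MellinConvergent, IntegrableOn, mul_comm _ u] using this
  · have hcont : IntegrableOn (fun u : ℝ ↦ u ^ (-s.re)) (Ioc a b) :=
      (continuousOn_id.rpow_const fun u hu ↦
        Or.inl (ha.trans_le hu.1).ne').integrableOn_Icc.mono_set Ioc_subset_Icc_self
    refine (hcont.mul_const (∫ t in Ioi (0 : ℝ), ‖(t : ℂ) ^ (s - 1) • f t‖)).congr ?_
    filter_upwards [ae_restrict_mem measurableSet_Ioc] with u hu
    exact (integral_norm_cpow_smul_comp_mul_right (ha.trans hu.1)).symm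

lemma hasMellin_intervalIntegral_comp_mul [CompleteSpace E] (hfm : StronglyMeasurable f)
    (hf : MellinConvergent f s) (ha : 0 < a) (hab : a ≤ b) :
    HasMellin (fun t ↦ ∫ u in a..b, f (t * u)) s ((∫ u in a..b, (u : ℂ) ^ (-s)) • mellin f s) := by
  have hint := integrable_cpow_smul_comp_mul (b := b) hfm hf ha
  simp only [HasMellin, MellinConvergent, mellin, intervalIntegral.integral_of_le hab]
  simp only [← integral_smul (_ ^ (s - 1)) fun u ↦ f (_ * u)]
  refine ⟨hint.integral_prod_left, ?_⟩
  rw [integral_integral_swap hint, ← integral_smul_const]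
  refine setIntegral_congr_fun measurableSet_Ioc fun u hu ↦ ?_
  simpa only [mellin, mul_comm _ u] using mellin_comp_mul_left f s (ha.trans hu.1)

end

lemma integrable_norm_add_mul_I_rpow {σ p : ℝ} (hσ : σ ≠ 0) (hp : 1 < p) :
    Integrable fun y : ℝ ↦ ‖(σ : ℂ) + y * Complex.I‖ ^ (-p) := by
  set m := min (σ ^ 2) 1
  have hm0 : 0 < m := lt_min (by positivity) one_pos
  have hJ : Integrable fun y : ℝ ↦ m ^ (-p / 2) * (1 + ‖y‖ ^ 2) ^ (-p / 2) :=
    (integrable_rpow_neg_one_add_norm_sq (E := ℝ) (by simpa using hp)).const_mul _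
  have hne (y : ℝ) : (σ : ℂ) + y * Complex.I ≠ 0 :=
    fun h ↦ hσ (by simpa using congrArg Complex.re h)
  refine hJ.mono' ?_ (Eventually.of_forall fun y ↦ ?_)
  · have : Continuous fun y : ℝ ↦ ‖(σ : ℂ) + y * Complex.I‖ := by fun_prop
    exact (this.rpow_const fun y ↦ Or.inl (norm_ne_zero_iff.2 (hne y))).aestronglyMeasurable
  · have hsq : ‖(σ : ℂ) + y * Complex.I‖ ^ (-p) = (σ ^ 2 + y ^ 2) ^ (-p / 2) := by
      rw [← Complex.normSq_add_mul_I, Complex.normSq_eq_norm_sq, ← Real.rpow_natCast,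
        ← Real.rpow_mul (norm_nonneg _)]
      congr 1
      push_cast
      ring
    rw [Real.norm_of_nonneg (by positivity), hsq, ← Real.mul_rpow hm0.le (by positivity)]
    refine Real.rpow_le_rpow_of_nonpos (by positivity) ?_ (by linarith)
    rw [mul_add, mul_one, Real.norm_eq_abs, sq_abs]
    exact add_le_add (min_le_left _ _) (mul_le_of_le_one_left (sq_nonneg y) (min_le_right _ _))

section Shift
variable {F : ℂ → ℂ} {σ₁ σ₂ p C : ℝ}

lemma integrable_vertical_of_norm_le {σ : ℝ} (hσ : σ ≠ 0) (hp : 1 < p)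
    (hF : ∀ s : ℂ, s.re = σ → ContinuousAt F s) (hFC : ∀ s : ℂ, s.re = σ → ‖F s‖ ≤ C * ‖s‖ ^ (-p)) :
    Integrable fun y : ℝ ↦ F (σ + y * Complex.I) := by
  have hcont : Continuous fun y : ℝ ↦ F (σ + y * Complex.I) :=
    continuous_iff_continuousAt.2 fun y ↦
      (hF _ (by simp)).comp (f := fun y : ℝ ↦ (σ + y * Complex.I : ℂ)) (by fun_prop)
  exact ((integrable_norm_add_mul_I_rpow hσ hp).const_mul C).mono' hcont.aestronglyMeasurable
    (Eventually.of_forall fun y ↦ hFC _ (by simp))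

lemma tendsto_horizontal_integral_zero (h12 : σ₁ ≤ σ₂) (hp : 0 < p)
    (hC : 0 ≤ C) (hFC : ∀ s : ℂ, σ₁ ≤ s.re → s.re ≤ σ₂ → ‖F s‖ ≤ C * ‖s‖ ^ (-p)) {l : Filter ℝ}
    (hl : Tendsto (fun T : ℝ ↦ |T|) l atTop) :
    Tendsto (fun T : ℝ ↦ ∫ x in σ₁..σ₂, F (x + T * Complex.I)) l (𝓝 0) := by
  have hzero : Tendsto (fun T : ℝ ↦ C * |T| ^ (-p) * |σ₂ - σ₁|) l (𝓝 0) := by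
    simpa using (((tendsto_rpow_neg_atTop hp).comp hl).const_mul C).mul_const |σ₂ - σ₁|
  refine squeeze_zero_norm' ?_ hzero
  filter_upwards [hl.eventually (eventually_gt_atTop 0)] with T hT
  refine intervalIntegral.norm_integral_le_of_norm_le_const fun x hx ↦ ?_
  rw [uIoc_of_le h12] at hx
  refine (hFC _ (by simpa using hx.1.le) (by simpa using hx.2)).trans ?_
  gcongr ?_ * ?_
  refine Real.rpow_le_rpow_of_nonpos hT ?_ (by linarith)
  simpa using Complex.abs_im_le_norm (x + T * Complex.I)

lemma integral_vertical_eq_of_norm_le (h12 : σ₁ ≤ σ₂) (h1 : σ₁ ≠ 0) (h2 : σ₂ ≠ 0) (hp : 1 < p)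
    (hC : 0 ≤ C) (hF : ∀ s : ℂ, σ₁ ≤ s.re → s.re ≤ σ₂ → DifferentiableAt ℂ F s)
    (hFC : ∀ s : ℂ, σ₁ ≤ s.re → s.re ≤ σ₂ → ‖F s‖ ≤ C * ‖s‖ ^ (-p)) :
    ∫ y : ℝ, F (σ₁ + y * Complex.I) = ∫ y : ℝ, F (σ₂ + y * Complex.I) := by
  have hvert : ∀ σ, σ₁ ≤ σ → σ ≤ σ₂ → σ ≠ 0 → Tendsto
      (fun T : ℝ ↦ ∫ y in -T..T, F (σ + y * Complex.I)) atTop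
        (𝓝 (∫ y : ℝ, F (σ + y * Complex.I))) := fun σ hσ₁ hσ₂ hσ ↦
    intervalIntegral_tendsto_integral
      (integrable_vertical_of_norm_le hσ hp (fun s hs ↦ (hF s (hs ▸ hσ₁) (hs ▸ hσ₂)).continuousAt)
        fun s hs ↦ hFC s (hs ▸ hσ₁) (hs ▸ hσ₂)) tendsto_neg_atTop_atBot tendsto_id
  have hrect (T : ℝ) : Complex.I * (∫ y in -T..T, F (σ₂ + y * Complex.I)) -
      Complex.I * (∫ y in -T..T, F (σ₁ + y * Complex.I)) =
      (∫ x in σ₁..σ₂, F (x + T * Complex.I)) - ∫ x in σ₁..σ₂, F (x + (-T : ℝ) * Complex.I) := by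
    have := Complex.integral_boundary_rect_eq_zero_of_differentiableOn F ⟨σ₁, -T⟩ ⟨σ₂, T⟩
      fun s hs ↦ by
        rw [Complex.mem_reProdIm, uIcc_of_le h12] at hs
        exact (hF s hs.1.1 hs.1.2).differentiableWithinAt
    simp only [smul_eq_mul] at this
    linear_combination this
  have hdiff := ((hvert σ₂ h12 le_rfl h2).const_mul Complex.I).sub
    ((hvert σ₁ le_rfl h12 h1).const_mul Complex.I)
  simp_rw [hrect] at hdiff
  have hhor := tendsto_horizontal_integral_zero h12 (zero_lt_one.trans hp) hC hFC
    tendsto_abs_atTop_atTop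
  have hhor' := (tendsto_horizontal_integral_zero h12 (zero_lt_one.trans hp) hC hFC
    tendsto_abs_atBot_atTop).comp tendsto_neg_atTop_atBot
  have := tendsto_nhds_unique hdiff (hhor.sub hhor')
  rw [sub_zero, ← mul_sub, mul_eq_zero, sub_eq_zero] at this
  exact (this.resolve_left Complex.I_ne_zero).symm

lemma mellinInv_eq_mellinInv_of_norm_le (h12 : σ₁ ≤ σ₂) (h1 : σ₁ ≠ 0) (h2 : σ₂ ≠ 0) (hp : 1 < p)
    (hC : 0 ≤ C) (hF : ∀ s : ℂ, σ₁ ≤ s.re → s.re ≤ σ₂ → DifferentiableAt ℂ F s)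
    (hFC : ∀ s : ℂ, σ₁ ≤ s.re → s.re ≤ σ₂ → ‖F s‖ ≤ C * ‖s‖ ^ (-p)) {x : ℝ} (hx : 0 < x) :
    mellinInv σ₁ F x = mellinInv σ₂ F x := by
  set D := max (x ^ (-σ₁)) (x ^ (-σ₂))
  have hD : 0 ≤ D := (Real.rpow_nonneg hx.le _).trans (le_max_left _ _)
  have hpow : ∀ s : ℂ, σ₁ ≤ s.re → s.re ≤ σ₂ → ‖(x : ℂ) ^ (-s)‖ ≤ D := fun s hs₁ hs₂ ↦ by
    rw [Complex.norm_cpow_eq_rpow_re_of_pos hx, Complex.neg_re]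
    rcases le_total 1 x with h | h
    · exact (Real.rpow_le_rpow_of_exponent_le h (neg_le_neg hs₁)).trans (le_max_left _ _)
    · exact (Real.rpow_le_rpow_of_exponent_ge hx h (neg_le_neg hs₂)).trans (le_max_right _ _)
  have hxc : (x : ℂ) ≠ 0 := Complex.ofReal_ne_zero.2 hx.ne'
  simp only [mellinInv, smul_eq_mul]
  rw [integral_vertical_eq_of_norm_le (F := fun s ↦ (x : ℂ) ^ (-s) * F s) (C := D * C) h12 h1 h2 hp
    (mul_nonneg hD hC)
    (fun s hs₁ hs₂ ↦ (differentiableAt_id.neg.const_cpow (Or.inl hxc)).mul (hF s hs₁ hs₂))]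
  intro s hs₁ hs₂
  rw [norm_mul, mul_assoc]
  exact mul_le_mul (hpow s hs₁ hs₂) (hFC s hs₁ hs₂) (norm_nonneg _) hD

lemma norm_mellinInv_le {σ : ℝ} (hσ : σ ≠ 0) (hp : 1 < p)
    (hFC : ∀ s : ℂ, s.re = σ → ‖F s‖ ≤ C * ‖s‖ ^ (-p)) {x : ℝ} (hx : 0 < x) :
    ‖mellinInv σ F x‖ ≤ C * (∫ y : ℝ, ‖(σ : ℂ) + y * Complex.I‖ ^ (-p)) * x ^ (-σ) := by
  have hbound : ‖∫ y : ℝ, (x : ℂ) ^ (-(σ + y * Complex.I)) • F (σ + y * Complex.I)‖ ≤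
      ∫ y : ℝ, C * x ^ (-σ) * ‖(σ : ℂ) + y * Complex.I‖ ^ (-p) := by
    refine norm_integral_le_of_norm_le ((integrable_norm_add_mul_I_rpow hσ hp).const_mul _)
      (Eventually.of_forall fun y ↦ ?_)
    have hre : ((σ : ℂ) + y * Complex.I).re = σ := by simp
    rw [norm_smul, Complex.norm_cpow_eq_rpow_re_of_pos hx, Complex.neg_re, hre, mul_comm C,
      mul_assoc]
    gcongr
    exact hFC _ hre
  have hpi : ‖1 / (2 * Real.pi)‖ ≤ 1 := by
    rw [Real.norm_of_nonneg (by positivity), div_le_one (by positivity)]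
    linarith [Real.two_le_pi]
  calc ‖mellinInv σ F x‖ ≤ 1 * _ := by
        rw [mellinInv, norm_smul]
        exact mul_le_mul hpi hbound (norm_nonneg _) zero_le_one
    _ = _ := by rw [integral_const_mul]; ring

lemma norm_le_of_mellin_eq {f : ℝ → ℂ} (h12 : σ₁ ≤ σ₂) (h1 : σ₁ ≠ 0) (h2 : σ₂ ≠ 0) (hp : 1 < p)
    (hC : 0 ≤ C) (hf : MellinConvergent f σ₁) (hfF : ∀ s : ℂ, s.re = σ₁ → mellin f s = F s)
    (hF : ∀ s : ℂ, σ₁ ≤ s.re → s.re ≤ σ₂ → DifferentiableAt ℂ F s)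
    (hFC : ∀ s : ℂ, σ₁ ≤ s.re → s.re ≤ σ₂ → ‖F s‖ ≤ C * ‖s‖ ^ (-p)) {x : ℝ} (hx : 0 < x)
    (hfx : ContinuousAt f x) :
    ‖f x‖ ≤ C * (∫ y : ℝ, ‖(σ₂ : ℂ) + y * Complex.I‖ ^ (-p)) * x ^ (-σ₂) := by
  have hmellin (y : ℝ) : mellin f (σ₁ + y * Complex.I) = F (σ₁ + y * Complex.I) := hfF _ (by simp)
  have hvert : Complex.VerticalIntegrable (mellin f) σ₁ := by
    simp only [Complex.VerticalIntegrable, hmellin]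
    exact integrable_vertical_of_norm_le h1 hp
      (fun s hs ↦ (hF s hs.ge (hs.trans_le h12)).continuousAt)
      fun s hs ↦ hFC s hs.ge (hs.trans_le h12)
  have hinv : f x = mellinInv σ₁ F x := by
    rw [← mellinInv_mellin_eq σ₁ f hx hf hvert hfx]
    simp only [mellinInv, hmellin]
  rw [hinv, mellinInv_eq_mellinInv_of_norm_le h12 h1 h2 hp hC hF hFC hx]
  exact norm_mellinInv_le h2 hp (fun s hs ↦ hFC s (hs ▸ h12) hs.le) hx

end Shift

end MellinAverage

section PrimeNumberTheorem
open Topology MeasureTheory Set Asymptotics ArithmeticFunction Chebyshev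

lemma LSeries_vonMangoldt_eq_inv_sub_logDeriv_riemannZeta₁ {s : ℂ} (hs : 1 < s.re) :
    LSeries (fun n ↦ (vonMangoldt n : ℂ)) s = (s - 1)⁻¹ - logDeriv riemannZeta₁ s := by
  have hs1 : s ≠ 1 := fun h ↦ by simp [h] at hs
  have hs1' : s - 1 ≠ 0 := sub_ne_zero.2 hs1
  have hζ : riemannZeta s ≠ 0 := riemannZeta_ne_zero_of_one_le_re hs.le
  rw [LSeries_vonMangoldt_eq_deriv_riemannZeta_div hs,
    deriv_riemannZeta_eq_neg_inv_sub_sq_mul_add hs1, logDeriv_apply,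
    riemannZeta₁_eq_sub_one_mul hs1]
  field_simp
  ring

/-- The error term `ψ(t) - t` of the prime number theorem, cut off to `t > 1` so that it has a
Mellin transform, and complex-valued. -/
noncomputable def psiError : ℝ → ℂ :=
  indicator (Ioi 1) fun t ↦ ((ψ t - t : ℝ) : ℂ)

lemma psi_eq_sum_Icc_one (t : ℝ) : ψ t = ∑ k ∈ Finset.Icc 1 ⌊t⌋₊, vonMangoldt k := rfl

lemma isBigO_psi_sub_id_atTop : (fun t ↦ ψ t - t) =O[atTop] fun t : ℝ ↦ t ^ (1 : ℝ) := by
  refine IsBigO.of_bound (Real.log 4 + 4 + 1) ?_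
  filter_upwards [eventually_ge_atTop 0] with t ht
  have := psi_le_const_mul_self ht
  rw [Real.rpow_one, Real.norm_eq_abs, Real.norm_of_nonneg ht, abs_le]
  constructor <;> nlinarith [psi_nonneg t, Real.log_nonneg (by norm_num : (1 : ℝ) ≤ 4)]

lemma locallyIntegrable_psi_sub_id : LocallyIntegrable fun t ↦ ((ψ t - t : ℝ) : ℂ) :=
  locallyIntegrableOn_univ.1 <| locallyIntegrableOn_ofReal <| locallyIntegrableOn_univ.2 <|
    psi_mono.locallyIntegrable.sub continuous_id.locallyIntegrable

lemma intervalIntegrable_psiError (a b : ℝ) : IntervalIntegrable psiError volume a b :=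
  intervalIntegrable_iff.2 <| ((locallyIntegrableOn_indicator_Ioi
    (locallyIntegrable_psi_sub_id.locallyIntegrableOn _) _
    isClosed_Icc.isLocallyClosed).integrableOn_isCompact isCompact_uIcc).mono_set uIoc_subset_uIcc

lemma stronglyMeasurable_psiError : StronglyMeasurable psiError :=
  ((Complex.measurable_ofReal.comp (psi_mono.measurable.sub measurable_id)).indicator
    measurableSet_Ioi).stronglyMeasurable

lemma mellinConvergent_psiError {s : ℂ} (hs : s.re < -1) : MellinConvergent psiError s :=
  mellinConvergent_indicator_Ioi one_pos (locallyIntegrable_psi_sub_id.locallyIntegrableOn _)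
    (Complex.isBigO_ofReal_left.2 isBigO_psi_sub_id_atTop) hs

lemma mellin_psiError_neg {s : ℂ} (hs : 1 < s.re) :
    mellin psiError (-s) = -(logDeriv riemannZeta₁ s + 1) / s := by
  have hO : (fun n ↦ ∑ k ∈ Finset.Icc 1 n, vonMangoldt k) =O[atTop]
      fun n : ℕ ↦ (n : ℝ) ^ (1 : ℝ) := by
    have h := (isBigO_psi_sub_id_atTop.add (isBigO_refl _ _)).comp_tendsto
      tendsto_natCast_atTop_atTop
    simpa [Function.comp_def, psi_eq_sum_Icc_one] using h
  have hL := LSeries_eq_div_add_mul_mellin (fun _ ↦ vonMangoldt_nonneg) hO hs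
  simp only [← psi_eq_sum_Icc_one] at hL
  rw [LSeries_vonMangoldt_eq_inv_sub_logDeriv_riemannZeta₁ hs] at hL
  have hs0 : s ≠ 0 := fun h ↦ by norm_num [h] at hs
  have hs1 : s - 1 ≠ 0 := sub_ne_zero.2 fun h ↦ by simp [h] at hs
  rw [eq_div_iff hs0, psiError]
  field_simp at hL ⊢
  refine mul_left_cancel₀ hs1 ?_
  linear_combination -hL

section
variable {α σ η δ : ℝ}

lemma norm_integral_cpow_neg_le_mul (hδ : 0 ≤ δ) (hδ1 : δ ≤ 1) {z : ℂ} (hz : -2 ≤ z.re) :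
    ‖∫ u in (1 : ℝ)..1 + δ, (u : ℂ) ^ (-z)‖ ≤ 4 * δ := by
  have h := intervalIntegral.norm_integral_le_of_norm_le_const (C := 4) (a := 1) (b := 1 + δ)
    (f := fun u : ℝ ↦ (u : ℂ) ^ (-z)) fun u hu ↦ ?_
  · simpa [abs_of_nonneg hδ] using h
  rw [uIoc_of_le (by linarith)] at hu
  have hu1 : 1 ≤ u := hu.1.le
  rw [Complex.norm_cpow_eq_rpow_re_of_pos (by linarith), Complex.neg_re]
  calc u ^ (-z.re) ≤ u ^ (2 : ℝ) := Real.rpow_le_rpow_of_exponent_le hu1 (by linarith)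
    _ = u ^ 2 := Real.rpow_two u
    _ ≤ 2 ^ 2 := by gcongr; linarith [hu.2]
    _ = 4 := by norm_num

lemma integral_one_cpow_neg {z : ℂ} (hz : z.re < 1) :
    ∫ u in (1 : ℝ)..1 + δ, (u : ℂ) ^ (-z) = (((1 + δ : ℝ) : ℂ) ^ (1 - z) - 1) / (1 - z) := by
  rw [integral_cpow (Or.inl (by simpa)), neg_add_eq_sub, Complex.ofReal_one, Complex.one_cpow]

lemma differentiableAt_integral_one_cpow_neg (hδ : 0 < 1 + δ) {z : ℂ} (hz : z.re < 1) :
    DifferentiableAt ℂ (fun z ↦ ∫ u in (1 : ℝ)..1 + δ, (u : ℂ) ^ (-z)) z := by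
  have hz1 : 1 - z ≠ 0 := fun h ↦ by simp [← sub_eq_zero.1 h] at hz
  have hbase : ((1 + δ : ℝ) : ℂ) ≠ 0 := Complex.ofReal_ne_zero.2 hδ.ne'
  have hdiff : DifferentiableAt ℂ
      (fun z : ℂ ↦ (((1 + δ : ℝ) : ℂ) ^ (1 - z) - 1) / (1 - z)) z := by
    fun_prop (disch := first | assumption | exact Or.inl hbase)
  refine hdiff.congr_of_eventuallyEq ?_
  filter_upwards [(isOpen_lt Complex.continuous_re continuous_const).mem_nhds hz] with w hw
  exact integral_one_cpow_neg hw

lemma norm_integral_cpow_neg_le_div (hδ : 0 ≤ δ) (hδ1 : δ ≤ 1) {z : ℂ} (hz : -2 ≤ z.re)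
    (hz0 : z.re < 0) : ‖∫ u in (1 : ℝ)..1 + δ, (u : ℂ) ^ (-z)‖ ≤ 9 / ‖z‖ := by
  have hzne : z ≠ 0 := fun h ↦ by simp [h] at hz0
  have hle : ‖z‖ ≤ ‖1 - z‖ := by
    rw [Complex.norm_def, Complex.norm_def, Complex.normSq_apply, Complex.normSq_apply]
    refine Real.sqrt_le_sqrt ?_
    simp only [Complex.sub_re, Complex.one_re, Complex.sub_im, Complex.one_im]
    nlinarith
  have hnum : ‖((1 + δ : ℝ) : ℂ) ^ (1 - z)‖ ≤ 8 := by
    rw [Complex.norm_cpow_eq_rpow_re_of_pos (by linarith), Complex.sub_re, Complex.one_re]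
    calc (1 + δ) ^ (1 - z.re) ≤ (1 + δ) ^ (3 : ℝ) :=
          Real.rpow_le_rpow_of_exponent_le (by linarith) (by linarith)
      _ ≤ 2 ^ (3 : ℝ) := by gcongr; linarith
      _ = 8 := by norm_num
  rw [integral_one_cpow_neg (hz0.trans one_pos), norm_div]
  refine div_le_div₀ (by norm_num) ?_ (norm_pos_iff.2 hzne) hle
  refine (norm_sub_le _ _).trans ?_
  rw [norm_one]
  linarith

lemma norm_integral_cpow_neg_le_rpow (hδ : 0 < δ) (hδ1 : δ ≤ 1) (hη : 0 ≤ η) (hη1 : η ≤ 1)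
    {z : ℂ} (hz : -2 ≤ z.re) (hz0 : z.re < 0) :
    ‖∫ u in (1 : ℝ)..1 + δ, (u : ℂ) ^ (-z)‖ ≤ 9 * δ ^ (1 - η) * ‖z‖ ^ (-η) := by
  set w := ‖∫ u in (1 : ℝ)..1 + δ, (u : ℂ) ^ (-z)‖
  have hw : 0 ≤ w := norm_nonneg _
  have hη1' : 0 ≤ 1 - η := by linarith
  calc w = w ^ (1 - η) * w ^ η := by
        rw [← Real.rpow_add_of_nonneg hw hη1' hη, sub_add_cancel, Real.rpow_one]
    _ ≤ (9 * δ) ^ (1 - η) * (9 / ‖z‖) ^ η := by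
        gcongr
        · exact (norm_integral_cpow_neg_le_mul hδ.le hδ1 hz).trans (by linarith)
        · exact norm_integral_cpow_neg_le_div hδ.le hδ1 hz hz0
    _ = 9 ^ (1 - η + η) * δ ^ (1 - η) * ‖z‖ ^ (-η) := by
        rw [Real.mul_rpow (by norm_num) hδ.le, Real.div_rpow (by norm_num) (norm_nonneg z),
          Real.rpow_add (by norm_num), Real.rpow_neg (norm_nonneg z)]
        ring
    _ = 9 * δ ^ (1 - η) * ‖z‖ ^ (-η) := by rw [sub_add_cancel, Real.rpow_one]

lemma exists_norm_logDeriv_riemannZeta₁_add_one_div_le (hα : 0 ≤ α) (hασ : α < σ) (hσ : σ < 2)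
    (hζ : ∀ z : ℂ, α < z.re → riemannZeta₁ z ≠ 0) {ε : ℝ} (hε : 0 < ε) :
    ∃ C : ℝ, 0 ≤ C ∧ ∀ s : ℂ, σ ≤ s.re → s.re ≤ 2 →
      ‖-(logDeriv riemannZeta₁ s + 1) / s‖ ≤ C * ‖s‖ ^ (ε - 1) := by
  obtain ⟨C, hC⟩ := exists_norm_logDeriv_riemannZeta₁_le_rpow hα hασ hσ hζ hε
  have hσ0 : 0 < σ := hα.trans_lt hασ
  refine ⟨max C 0 + σ ^ (-ε), by positivity, fun s hs hs2 ↦ ?_⟩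
  have hσs : σ ≤ ‖s‖ := hs.trans (Complex.re_le_norm s)
  have hs0 : 0 < ‖s‖ := hσ0.trans_le hσs
  have hone : 1 ≤ σ ^ (-ε) * ‖s‖ ^ ε := by
    rw [Real.rpow_neg hσ0.le, ← div_eq_inv_mul, one_le_div (by positivity)]
    gcongr
  rw [norm_div, norm_neg, Real.rpow_sub_one hs0.ne', ← mul_div_assoc]
  gcongr
  calc ‖logDeriv riemannZeta₁ s + 1‖ ≤ C * ‖s‖ ^ ε + 1 :=
        (norm_add_le _ _).trans (by rw [norm_one]; gcongr; exact hC s hs hs2)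
    _ ≤ max C 0 * ‖s‖ ^ ε + σ ^ (-ε) * ‖s‖ ^ ε := by gcongr; exact le_max_left _ _
    _ = _ := by ring

lemma differentiableAt_neg_logDeriv_riemannZeta₁_add_one_div {s : ℂ} (hs : s ≠ 0)
    (hζ : riemannZeta₁ s ≠ 0) :
    DifferentiableAt ℂ (fun z ↦ -(logDeriv riemannZeta₁ z + 1) / z) s := by
  have hlog : DifferentiableAt ℂ (logDeriv riemannZeta₁) s :=
    (differentiable_riemannZeta₁.analyticAt _).deriv.differentiableAt.div
      (differentiable_riemannZeta₁ _) hζ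
  fun_prop (disch := assumption)

/- Averaging over a multiplicative window of relative length `δ` multiplies the Mellin transform by
a factor of decay `‖z‖ ^ (-η)`, which makes the shifted inversion integral converge absolutely, at
the cost of a factor `δ ^ (-η)` only. -/
lemma exists_norm_integral_psiError_le (hα : 0 ≤ α) (hασ : α < σ) (hσ : σ < 2)
    (hζ : ∀ z : ℂ, α < z.re → riemannZeta₁ z ≠ 0) (hη : 0 < η) (hη1 : η ≤ 1) :
    ∃ C : ℝ, ∀ δ x : ℝ, 0 < δ → δ ≤ 1 → 0 < x →
      ‖∫ u in (1 : ℝ)..1 + δ, psiError (x * u)‖ ≤ C * δ ^ (1 - η) * x ^ σ := by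
  obtain ⟨C, hC0, hC⟩ :=
    exists_norm_logDeriv_riemannZeta₁_add_one_div_le hα hασ hσ hζ (half_pos hη)
  refine ⟨9 * C * ∫ y : ℝ, ‖((-σ : ℝ) : ℂ) + y * Complex.I‖ ^ (-(1 + η / 2)),
    fun δ x hδ hδ1 hx ↦ ?_⟩
  have hmellin {z : ℂ} (hz : z.re < -1) := hasMellin_intervalIntegral_comp_mul
    stronglyMeasurable_psiError (mellinConvergent_psiError hz) one_pos
    (le_add_of_nonneg_right hδ.le)
  have hbound := norm_le_of_mellin_eq (σ₁ := -2) (σ₂ := -σ) (p := 1 + η / 2)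
    (C := 9 * δ ^ (1 - η) * C)
    (F := fun z ↦ (∫ u in (1 : ℝ)..1 + δ, (u : ℂ) ^ (-z)) *
      (-(logDeriv riemannZeta₁ (-z) + 1) / -z))
    (f := fun t ↦ ∫ u in (1 : ℝ)..1 + δ, psiError (t * u))
    (by linarith) (by norm_num) (by linarith) (by linarith) (by positivity)
    (hmellin (by norm_num)).1 (fun z hz ↦ ?_) (fun z _ hz' ↦ ?_) (fun z hz hz' ↦ ?_) hx
    (continuousAt_intervalIntegral_comp_mul intervalIntegrable_psiError hx.ne')
  · rw [neg_neg] at hbound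
    refine hbound.trans_eq ?_
    ring
  · rw [(hmellin (by norm_num [hz])).2, smul_eq_mul, ← mellin_psiError_neg (by norm_num [hz]),
      neg_neg]
  · have hre : α < (-z).re := hασ.trans_le (by simpa using le_neg.1 hz')
    have hne : -z ≠ 0 := fun h ↦ by simp [h] at hre; linarith
    have hd := differentiableAt_neg_logDeriv_riemannZeta₁_add_one_div hne (hζ _ hre)
    exact (differentiableAt_integral_one_cpow_neg (by linarith) (by linarith)).mul
      (hd.comp z differentiableAt_id.neg)
  · have hz0 : 0 < ‖z‖ := norm_pos_iff.2 fun h ↦ by norm_num [h] at hz'; linarith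
    calc _ ≤ (9 * δ ^ (1 - η) * ‖z‖ ^ (-η)) * (C * ‖z‖ ^ (η / 2 - 1)) := by
          rw [norm_mul]
          refine mul_le_mul (norm_integral_cpow_neg_le_rpow hδ hδ1 hη.le hη1 hz (by linarith)) ?_
            (norm_nonneg _) (by positivity)
          simpa using hC (-z) (by simpa using le_neg.1 hz') (by simpa using neg_le.1 hz)
      _ = 9 * δ ^ (1 - η) * C * (‖z‖ ^ (-η) * ‖z‖ ^ (η / 2 - 1)) := by ring
      _ = _ := by
          rw [← Real.rpow_add hz0]
          ring_nf

end

section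
variable {g : ℝ → ℝ} {x δ : ℝ}

lemma integral_comp_mul_sub_mul (hg : Monotone g) (hx : 0 ≤ x) :
    ∫ u in (1 : ℝ)..1 + δ, (g (x * u) - x * u) =
      (∫ u in (1 : ℝ)..1 + δ, g (x * u)) - x * (δ + δ ^ 2 / 2) := by
  rw [intervalIntegral.integral_sub
    (f := fun u ↦ g (x * u)) (hg.comp (monotone_mul_left_of_nonneg hx)).intervalIntegrable
    ((continuous_const_mul x).intervalIntegrable _ _), intervalIntegral.integral_const_mul,
    integral_id]
  ring

lemma mul_sub_le_integral_comp_mul (hg : Monotone g) (hx : 0 ≤ x) (hδ : 0 ≤ δ) :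
    δ * (g x - x) ≤ (∫ u in (1 : ℝ)..1 + δ, (g (x * u) - x * u)) + x * δ ^ 2 / 2 := by
  have hle : ∫ _ in (1 : ℝ)..1 + δ, g x ≤ ∫ u in (1 : ℝ)..1 + δ, g (x * u) :=
    intervalIntegral.integral_mono_on (by linarith) intervalIntegrable_const
      (hg.comp (monotone_mul_left_of_nonneg hx)).intervalIntegrable
      fun u hu ↦ hg (le_mul_of_one_le_right hx hu.1)
  rw [intervalIntegral.integral_const, add_sub_cancel_left, smul_eq_mul] at hle
  rw [integral_comp_mul_sub_mul hg hx]
  linarith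

lemma integral_comp_mul_le_mul_sub (hg : Monotone g) (hx : 0 ≤ x) (hδ : 0 ≤ δ) :
    ∫ u in (1 : ℝ)..1 + δ, (g (x * u) - x * u) ≤
      δ * (g (x * (1 + δ)) - x * (1 + δ)) + x * δ ^ 2 / 2 := by
  have hle : ∫ u in (1 : ℝ)..1 + δ, g (x * u) ≤ ∫ _ in (1 : ℝ)..1 + δ, g (x * (1 + δ)) :=
    intervalIntegral.integral_mono_on (by linarith)
      (hg.comp (monotone_mul_left_of_nonneg hx)).intervalIntegrable intervalIntegrable_const
      fun u hu ↦ hg (mul_le_mul_of_nonneg_left hu.2 hx)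
  rw [intervalIntegral.integral_const, add_sub_cancel_left, smul_eq_mul] at hle
  rw [integral_comp_mul_sub_mul hg hx]
  linarith

lemma mul_abs_sub_le_of_abs_integral_comp_mul_le (hg : Monotone g) (hx : 0 ≤ x) (hδ : 0 ≤ δ) {B : ℝ}
    (hB : |∫ u in (1 : ℝ)..1 + δ, (g (x * u) - x * u)| ≤ B)
    (hB' : |∫ u in (1 : ℝ)..1 + δ, (g (x / (1 + δ) * u) - x / (1 + δ) * u)| ≤ B) :
    δ * |g x - x| ≤ B + x * δ ^ 2 / 2 := by
  rw [← abs_of_nonneg hδ, ← abs_mul, abs_of_nonneg hδ, abs_le]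
  constructor
  · have hup := integral_comp_mul_le_mul_sub hg (x := x / (1 + δ)) (by positivity) hδ
    rw [div_mul_cancel₀ _ (by positivity)] at hup
    have hle : x / (1 + δ) * δ ^ 2 ≤ x * δ ^ 2 := by
      gcongr
      exact div_le_self hx (by linarith)
    linarith [(abs_le.1 hB').1]
  · linarith [mul_sub_le_integral_comp_mul hg hx hδ, (abs_le.1 hB).2]

lemma isBigO_rpow_rpow_atTop_of_le {a b : ℝ} (h : a ≤ b) :
    (fun x : ℝ ↦ x ^ a) =O[atTop] fun x : ℝ ↦ x ^ b := by
  refine IsBigO.of_bound' ?_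
  filter_upwards [eventually_ge_atTop 1] with x hx
  rw [Real.norm_of_nonneg (by positivity), Real.norm_of_nonneg (by positivity)]
  exact Real.rpow_le_rpow_of_exponent_le hx h

lemma isBigO_sub_id_of_integral_comp_mul_le (hg : Monotone g) {σ η C : ℝ} (hσ : 0 ≤ σ)
    (hC : ∀ δ x : ℝ, 0 < δ → δ ≤ 1 → 1 ≤ x →
      |∫ u in (1 : ℝ)..1 + δ, (g (x * u) - x * u)| ≤ C * δ ^ (1 - η) * x ^ σ)
    {a : ℝ} (ha : σ + η / 2 ≤ a) (ha' : 1 / 2 ≤ a) :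
    (fun x ↦ g x - x) =O[atTop] fun x : ℝ ↦ x ^ a := by
  have hC0 : 0 ≤ C := by simpa using (abs_nonneg _).trans (hC 1 1 one_pos le_rfl le_rfl)
  refine IsBigO.of_bound (C + 1) ?_
  filter_upwards [eventually_ge_atTop 2] with x hx
  have hx0 : 0 < x := by linarith
  have hx1 : 1 ≤ x := by linarith
  -- The window `δ = x ^ (-1 / 2)` makes the trivial error `x * δ` admissible.
  set δ := x ^ (-1 / 2 : ℝ) with hδ
  have hδ0 : 0 < δ := by positivity
  have hδ1 : δ ≤ 1 := Real.rpow_le_one_of_one_le_of_nonpos hx1 (by norm_num)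
  have hxδ : x * δ ≤ x ^ a := by
    rw [hδ, ← Real.rpow_one_add' hx0.le (by norm_num)]
    exact Real.rpow_le_rpow_of_exponent_le hx1 (by linarith)
  have hCδ : C * δ ^ (1 - η) * x ^ σ ≤ δ * (C * x ^ a) := by
    have : δ ^ (-η) * x ^ σ ≤ x ^ a := by
      rw [hδ, ← Real.rpow_mul hx0.le, ← Real.rpow_add hx0]
      exact Real.rpow_le_rpow_of_exponent_le hx1 (by linarith)
    rw [sub_eq_add_neg, Real.rpow_add hδ0, Real.rpow_one]
    calc C * (δ * δ ^ (-η)) * x ^ σ = δ * (C * (δ ^ (-η) * x ^ σ)) := by ring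
      _ ≤ δ * (C * x ^ a) := by gcongr
  rw [Real.norm_eq_abs, Real.norm_of_nonneg (by positivity)]
  refine le_of_mul_le_mul_left ?_ hδ0
  calc δ * |g x - x| ≤ δ * (C * x ^ a) + x * δ ^ 2 / 2 := by
        refine mul_abs_sub_le_of_abs_integral_comp_mul_le hg hx0.le hδ0.le
          ((hC δ x hδ0 hδ1 hx1).trans hCδ) ((hC δ _ hδ0 hδ1 ?_).trans (le_trans ?_ hCδ))
        · exact (one_le_div (by positivity)).2 (by linarith)
        · gcongr
          exact div_le_self hx0.le (by linarith)
    _ ≤ δ * ((C + 1) * x ^ a) := by nlinarith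

end

lemma integral_psiError_comp_mul {x δ : ℝ} (hx : 1 ≤ x) (hδ : 0 ≤ δ) :
    ∫ u in (1 : ℝ)..1 + δ, psiError (x * u) =
      ((∫ u in (1 : ℝ)..1 + δ, (ψ (x * u) - x * u) : ℝ) : ℂ) := by
  rw [← intervalIntegral.integral_ofReal]
  refine intervalIntegral.integral_congr_ae (Eventually.of_forall fun u hu ↦ ?_)
  rw [uIoc_of_le (by linarith)] at hu
  exact indicator_of_mem (mem_Ioi.2 (one_lt_mul_of_le_of_lt hx hu.1)) _

lemma isBigO_psi_sub_id {α a : ℝ} (hα : 1 / 2 ≤ α) (hαa : α < a)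
    (hζ : ∀ z : ℂ, α < z.re → riemannZeta₁ z ≠ 0) :
    (fun x ↦ ψ x - x) =O[atTop] fun x : ℝ ↦ x ^ a := by
  rcases le_or_gt 1 a with ha | ha
  · exact isBigO_psi_sub_id_atTop.trans (isBigO_rpow_rpow_atTop_of_le ha)
  obtain ⟨C, hC⟩ := exists_norm_integral_psiError_le (σ := (α + a) / 2) (η := a - α)
    (by linarith) (by linarith) (by linarith) hζ (by linarith) (by linarith)
  refine isBigO_sub_id_of_integral_comp_mul_le psi_mono (σ := (α + a) / 2) (η := a - α) (C := C)
    (by linarith) (fun δ x hδ hδ1 hx ↦ ?_) (by linarith) (by linarith)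
  simpa only [integral_psiError_comp_mul hx hδ.le, Complex.norm_real, Real.norm_eq_abs]
    using hC δ x hδ hδ1 (by linarith)

lemma isBigO_theta_sub_id {α a : ℝ} (hα : 1 / 2 ≤ α) (hαa : α < a)
    (hζ : ∀ z : ℂ, α < z.re → riemannZeta₁ z ≠ 0) :
    (fun x ↦ θ x - x) =O[atTop] fun x : ℝ ↦ x ^ a := by
  have hsqrt : Real.sqrt =O[atTop] fun x : ℝ ↦ x ^ a := by
    rw [funext Real.sqrt_eq_rpow]
    exact isBigO_rpow_rpow_atTop_of_le (by linarith)
  exact ((isBigO_psi_sub_id hα hαa hζ).sub (isBigO_psi_sub_theta_sqrt.trans hsqrt)).congr_left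
    fun x ↦ by simp

end PrimeNumberTheorem

section ExponentialIntegral
open Topology MeasureTheory Set Asymptotics

/-- The complementary exponential integral `Ein z = ∑_{k ≥ 1} (-1)^(k+1) z^k / (k · k!)`, the entire
part of `expIntegralE1`. -/
noncomputable def expIntegralEin (z : ℂ) : ℂ :=
  -∑' k : ℕ, (-z) ^ (k + 1) / (((k + 1) * Nat.factorial (k + 1) : ℕ) : ℂ)

lemma expIntegralE1_eq_add_expIntegralEin (z : ℂ) :
    expIntegralE1 z =
      -(Real.eulerMascheroniConstant : ℂ) - Complex.log z + expIntegralEin z :=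
  sub_eq_add_neg _ _

lemma expIntegralEin_zero : expIntegralEin 0 = 0 := by simp [expIntegralEin]

lemma hasDerivAt_expIntegralEin (z : ℂ) :
    HasDerivAt expIntegralEin (∑' k : ℕ, (-z) ^ k / ((k + 1).factorial : ℂ)) z := by
  have hterm (k : ℕ) (y : ℂ) :
      HasDerivAt (fun z : ℂ ↦ (-z) ^ (k + 1) / (((k + 1) * Nat.factorial (k + 1) : ℕ) : ℂ))
        (-((-y) ^ k / ((k + 1).factorial : ℂ))) y := by
    refine (((hasDerivAt_neg y).pow (k + 1)).div_const _).congr_deriv ?_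
    have hk : (k : ℂ) + 1 ≠ 0 := Nat.cast_add_one_ne_zero k
    have hk' : ((k + 1).factorial : ℂ) ≠ 0 := Nat.cast_ne_zero.2 (Nat.factorial_ne_zero _)
    push_cast [add_tsub_cancel_right]
    field_simp
  have hbound (k : ℕ) (y : ℂ) (hy : y ∈ Metric.ball 0 (‖z‖ + 1)) :
      ‖-((-y) ^ k / ((k + 1).factorial : ℂ))‖ ≤ (‖z‖ + 1) ^ k / (k.factorial : ℝ) := by
    rw [norm_neg, norm_div, norm_pow, norm_neg, Complex.norm_natCast]
    have := (mem_ball_zero_iff.1 hy).le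
    gcongr
    exact k.le_succ
  have h := hasDerivAt_tsum_of_isPreconnected (Real.summable_pow_div_factorial (‖z‖ + 1))
    Metric.isOpen_ball (convex_ball _ _).isPreconnected (fun k y _ ↦ hterm k y) hbound
    (Metric.mem_ball_self (by positivity)) (by simp [summable_zero])
    (mem_ball_zero_iff.2 (lt_add_one ‖z‖))
  exact h.neg.congr_deriv (by simp only [tsum_neg, neg_neg])

lemma continuous_expIntegralEin : Continuous expIntegralEin :=
  continuous_iff_continuousAt.2 fun z ↦ (hasDerivAt_expIntegralEin z).continuousAt

lemma tsum_neg_pow_div_factorial_succ {z : ℂ} (hz : z ≠ 0) :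
    ∑' k : ℕ, (-z) ^ k / ((k + 1).factorial : ℂ) = (1 - Complex.exp (-z)) / z := by
  have hexp : HasSum (fun k : ℕ ↦ (-z) ^ k / (k.factorial : ℂ)) (Complex.exp (-z)) := by
    rw [Complex.exp_eq_exp_ℂ]
    exact NormedSpace.expSeries_div_hasSum_exp (-z)
  have hsum := ((hasSum_nat_add_iff' 1).2 hexp).div_const (-z)
  simp only [Finset.sum_range_one, pow_zero, Nat.factorial_zero, Nat.cast_one, div_one] at hsum
  rw [div_neg, ← neg_div, neg_sub] at hsum
  refine (hsum.congr_fun fun k ↦ ?_).tsum_eq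
  rw [pow_succ]
  field_simp

lemma hasDerivAt_expIntegralE1 {z : ℂ} (hz : z ∈ Complex.slitPlane) :
    HasDerivAt expIntegralE1 (-(Complex.exp (-z) / z)) z := by
  have hz0 : z ≠ 0 := Complex.slitPlane_ne_zero hz
  have hEin := hasDerivAt_expIntegralEin z
  rw [tsum_neg_pow_div_factorial_succ hz0] at hEin
  rw [funext expIntegralE1_eq_add_expIntegralEin]
  refine (((Complex.hasDerivAt_log hz).const_sub _).add hEin).congr_deriv ?_
  field_simp
  ring

lemma hasMellin_log_smul_exp_neg :
    HasMellin (fun t : ℝ ↦ Real.log t • ((Real.exp (-t) : ℝ) : ℂ)) 1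
      (-Real.eulerMascheroniConstant) := by
  obtain ⟨hconv, hderiv⟩ := mellin_hasDerivAt_of_isBigO_rpow
    (f := fun t : ℝ ↦ ((Real.exp (-t) : ℝ) : ℂ)) (s := 1) (a := 2) (b := 0)
    ((show Continuous fun t : ℝ ↦ ((Real.exp (-t) : ℝ) : ℂ) by fun_prop).locallyIntegrable
      |>.locallyIntegrableOn _)
    (IsBigO.of_norm_left <| by
      simpa [Complex.norm_exp] using (isLittleO_exp_neg_mul_rpow_atTop one_pos (-2)).isBigO)
    (by norm_num)
    ((Continuous.tendsto (by fun_prop) (0 : ℝ)).mono_left nhdsWithin_le_nhds |>.isBigO_one ℝ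
      |>.congr_right (by simp))
    (by norm_num)
  refine ⟨hconv, (HasDerivAt.congr_of_eventuallyEq hderiv ?_).unique Complex.hasDerivAt_Gamma_one⟩
  filter_upwards [(isOpen_lt continuous_const Complex.continuous_re).mem_nhds
    (show (0 : ℝ) < (1 : ℂ).re by simp)] with z hz
  rw [Complex.Gamma_eq_integral hz, Complex.GammaIntegral_eq_mellin]

lemma integrableOn_log_mul_exp_neg :
    IntegrableOn (fun t : ℝ ↦ ((Real.log t * Real.exp (-t) : ℝ) : ℂ)) (Ioi 0) := by
  simpa [MellinConvergent] using hasMellin_log_smul_exp_neg.1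

lemma integral_log_mul_exp_neg :
    ∫ t in Ioi (0 : ℝ), ((Real.log t * Real.exp (-t) : ℝ) : ℂ) =
      -Real.eulerMascheroniConstant := by
  simpa [mellin] using hasMellin_log_smul_exp_neg.2

lemma continuous_exp_neg_sub_one_mul_log :
    Continuous fun x : ℝ ↦ (Real.exp (-x) - 1) * Real.log x := by
  have hdiff : Differentiable ℝ fun x : ℝ ↦ Real.exp (-x) := by fun_prop
  have hslope : Continuous (dslope (fun x : ℝ ↦ Real.exp (-x)) 0) := by
    rw [← continuousOn_univ, continuousOn_dslope univ_mem]
    exact ⟨hdiff.continuous.continuousOn, hdiff 0⟩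
  refine (hslope.mul Real.continuous_mul_log).congr fun x ↦ ?_
  have hx := sub_smul_dslope (fun x : ℝ ↦ Real.exp (-x)) 0 x
  rw [sub_zero, smul_eq_mul, neg_zero, Real.exp_zero] at hx
  rw [← hx, Pi.mul_apply]
  ring

lemma hasDerivAt_expIntegralE1_ofReal_add {x : ℝ} (hx : 0 < x) :
    HasDerivAt (fun x : ℝ ↦ expIntegralE1 x + ((Real.exp (-x) * Real.log x : ℝ) : ℂ))
      (-((Real.log x * Real.exp (-x) : ℝ) : ℂ)) x := by
  have hx0 : (x : ℂ) ≠ 0 := Complex.ofReal_ne_zero.2 hx.ne'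
  have hE : HasDerivAt (fun x : ℝ ↦ expIntegralE1 x) (-(Complex.exp (-x) / x)) x :=
    (hasDerivAt_expIntegralE1 (Complex.ofReal_mem_slitPlane.2 hx)).comp_ofReal
  have hlog := ((hasDerivAt_neg x).exp.mul (Real.hasDerivAt_log hx.ne')).ofReal_comp
  refine (hE.add hlog).congr_deriv ?_
  push_cast
  field_simp
  ring

lemma tendsto_exp_neg_mul_log_atTop :
    Tendsto (fun x : ℝ ↦ Real.exp (-x) * Real.log x) atTop (𝓝 0) := by
  refine squeeze_zero_norm' ?_ (Real.tendsto_pow_mul_exp_neg_atTop_nhds_zero 1)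
  filter_upwards [eventually_ge_atTop 1] with x hx
  rw [norm_mul, Real.norm_of_nonneg (Real.exp_pos _).le, Real.norm_of_nonneg (Real.log_nonneg hx),
    pow_one, mul_comm]
  gcongr
  exact Real.log_le_self (by linarith)

-- `x ↦ E₁(x) + e⁻ˣ log x` has derivative `-e⁻ˣ log x` and tends to `-γ` at `0`, while
-- `∫₀^∞ e⁻ᵗ log t dt = Γ'(1) = -γ`.
lemma tendsto_expIntegralE1_ofReal_atTop :
    Tendsto (fun x : ℝ ↦ expIntegralE1 x) atTop (𝓝 0) := by
  set H : ℝ → ℂ := fun x ↦ expIntegralE1 x + ((Real.exp (-x) * Real.log x : ℝ) : ℂ) with hH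
  have hderiv : ∀ x ∈ Ioi (0 : ℝ), HasDerivAt H (-((Real.log x * Real.exp (-x) : ℝ) : ℂ)) x :=
    fun x hx ↦ hasDerivAt_expIntegralE1_ofReal_add hx
  have hint := integrableOn_log_mul_exp_neg.neg
  have hH_eq : EqOn H (fun x ↦ -(Real.eulerMascheroniConstant : ℂ) + expIntegralEin x +
      (((Real.exp (-x) - 1) * Real.log x : ℝ) : ℂ)) (Ici 0) := fun x hx ↦ by
    simp only [hH, expIntegralE1_eq_add_expIntegralEin, ← Complex.ofReal_log hx]
    push_cast
    ring
  have hcont : ContinuousWithinAt H (Ici 0) 0 :=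
    ((continuous_const.add (continuous_expIntegralEin.comp Complex.continuous_ofReal)).add
      (Complex.continuous_ofReal.comp continuous_exp_neg_sub_one_mul_log)).continuousWithinAt.congr
      hH_eq (hH_eq self_mem_Ici)
  have hlim := tendsto_limUnder_of_hasDerivAt_of_integrableOn_Ioi hderiv hint
  have hH0 : H 0 = -Real.eulerMascheroniConstant := by
    simp [hH, expIntegralE1_eq_add_expIntegralEin, expIntegralEin_zero]
  have hlim0 : limUnder atTop H = 0 := by
    have h := integral_Ioi_of_hasDerivAt_of_tendsto hcont hderiv hint hlim
    rw [integral_neg, integral_log_mul_exp_neg, hH0] at h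
    linear_combination -h
  rw [hlim0] at hlim
  simpa [hH] using
    hlim.sub ((Complex.continuous_ofReal.tendsto 0).comp tendsto_exp_neg_mul_log_atTop)

end ExponentialIntegral

section PartialSummation
open Topology MeasureTheory Set Asymptotics Chebyshev

section
variable {w w' : ℝ → ℂ} {x : ℝ}

lemma sum_primesBelow_mul_log_eq_sub_integral (hx : 2 ≤ x)
    (hw : ∀ t ∈ Icc 2 x, HasDerivAt w (w' t) t) (hw' : ContinuousOn w' (Icc 2 x)) :
    ∑ p ∈ Nat.primesBelow (⌊x⌋₊ + 1), w p * (Real.log p : ℂ) =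
      w x * (θ x : ℂ) - ∫ t in 2..x, w' t * (θ t : ℂ) := by
  let c : ℕ → ℂ := fun n ↦ if n.Prime then (Real.log n : ℂ) else 0
  have hsum (y : ℝ) : ∑ k ∈ Finset.Icc 0 ⌊y⌋₊, c k = (θ y : ℂ) := by
    rw [theta_eq_sum_Icc, Complex.ofReal_sum, Finset.sum_filter]
  have hderiv : EqOn w' (deriv w) (Icc 2 x) := fun t ht ↦ (hw t ht).deriv.symm
  have habel := sum_mul_eq_sub_integral_mul₁ c (f := w) (by simp [c]) (by simp [c]) x
    (fun t ht ↦ (hw t ht).differentiableAt)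
    (hw'.integrableOn_Icc.congr_fun hderiv measurableSet_Icc)
  simp_rw [hsum] at habel
  have hint : ∫ t in Ioc 2 x, deriv w t * (θ t : ℂ) = ∫ t in 2..x, w' t * (θ t : ℂ) := by
    rw [intervalIntegral.integral_of_le hx]
    refine setIntegral_congr_fun measurableSet_Ioc fun t ht ↦ ?_
    simp only [hderiv (Ioc_subset_Icc_self ht)]
  rw [← hint, ← habel, Nat.primesBelow, Finset.sum_filter, Nat.range_succ_eq_Icc_zero]
  exact Finset.sum_congr rfl fun n _ ↦ by simp only [c, mul_ite, mul_zero]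

lemma sum_primesBelow_mul_log_eq_integral_add (hx : 2 ≤ x)
    (hw : ∀ t ∈ Icc 2 x, HasDerivAt w (w' t) t) (hw' : ContinuousOn w' (Icc 2 x)) :
    ∑ p ∈ Nat.primesBelow (⌊x⌋₊ + 1), w p * (Real.log p : ℂ) =
      (∫ t in 2..x, w t) + 2 * w 2 + w x * ((θ x - x : ℝ) : ℂ) -
        ∫ t in 2..x, w' t * ((θ t - t : ℝ) : ℂ) := by
  rw [← uIcc_of_le hx] at hw hw'
  have hwc : ContinuousOn w (uIcc 2 x) := fun t ht ↦ (hw t ht).continuousAt.continuousWithinAt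
  have hwid : IntervalIntegrable (fun t ↦ w' t * (t : ℂ)) volume 2 x :=
    (hw'.mul Complex.continuous_ofReal.continuousOn).intervalIntegrable
  have hwθ : IntervalIntegrable (fun t ↦ w' t * (θ t : ℂ)) volume 2 x :=
    IntervalIntegrable.continuousOn_mul
      (intervalIntegrable_iff.2 (intervalIntegrable_iff.1 theta_mono.intervalIntegrable).ofReal) hw'
  have hparts : (∫ t in 2..x, w' t * (t : ℂ)) + ∫ t in 2..x, w t = w x * x - w 2 * 2 := by
    rw [← intervalIntegral.integral_add hwid hwc.intervalIntegrable,
      intervalIntegral.integral_eq_sub_of_hasDerivAt (f := fun t : ℝ ↦ w t * (t : ℂ))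
        (fun t ht ↦ ?_) (hwid.add hwc.intervalIntegrable)]
    · norm_num
    · exact ((hw t ht).mul (hasDerivAt_id t).ofReal_comp).congr_deriv (by simp)
  rw [uIcc_of_le hx] at hw hw'
  rw [sum_primesBelow_mul_log_eq_sub_integral hx hw hw']
  simp only [Complex.ofReal_sub, mul_sub]
  rw [intervalIntegral.integral_sub hwθ hwid]
  linear_combination -hparts

end

lemma hasDerivAt_ofReal_cpow_div_log {s : ℂ} (hs : s ≠ 0) {t : ℝ} (ht : 1 < t) :
    HasDerivAt (fun t : ℝ ↦ (t : ℂ) ^ (-s) / (Real.log t : ℂ))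
      (-((t : ℂ) ^ (-s - 1) * (s / (Real.log t : ℂ) + 1 / (Real.log t : ℂ) ^ 2))) t := by
  have ht0 : t ≠ 0 := by linarith
  have ht0' : (t : ℂ) ≠ 0 := Complex.ofReal_ne_zero.2 ht0
  have hlog : (Real.log t : ℂ) ≠ 0 := Complex.ofReal_ne_zero.2 (Real.log_pos ht).ne'
  refine ((hasDerivAt_ofReal_cpow_const ht0 (neg_ne_zero.2 hs)).div
    (Real.hasDerivAt_log ht0).ofReal_comp hlog).congr_deriv ?_
  rw [Complex.cpow_sub _ _ ht0', Complex.cpow_one]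
  push_cast
  field_simp
  ring

lemma continuousOn_ofReal_cpow_Ici_two (s : ℂ) :
    ContinuousOn (fun t : ℝ ↦ (t : ℂ) ^ s) (Ici 2) := fun t ht ↦
  (Complex.continuousAt_ofReal_cpow_const t _
    (Or.inr (zero_lt_two.trans_le ht).ne')).continuousWithinAt

lemma log_ne_zero_of_two_le {t : ℝ} (ht : 2 ≤ t) : Real.log t ≠ 0 :=
  (Real.log_pos (by linarith)).ne'

lemma continuousOn_log_Ici_two : ContinuousOn Real.log (Ici 2) :=
  Real.continuousOn_log.mono fun _ ht ↦ (zero_lt_two.trans_le ht).ne'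

lemma mul_ofReal_mem_slitPlane {z : ℂ} (hz : z ∈ Complex.slitPlane) {r : ℝ} (hr : 0 < r) :
    z * r ∈ Complex.slitPlane := by
  rw [Complex.mem_slitPlane_iff_arg] at hz ⊢
  rw [Complex.arg_mul_real hr]
  exact ⟨hz.1, mul_ne_zero hz.2 (Complex.ofReal_ne_zero.2 hr.ne')⟩

lemma hasDerivAt_expIntegralE1_mul_log {s : ℂ} (hs : s - 1 ∈ Complex.slitPlane) {t : ℝ}
    (ht : 1 < t) :
    HasDerivAt (fun t : ℝ ↦ expIntegralE1 ((s - 1) * (Real.log t : ℂ)))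
      (-((t : ℂ) ^ (-s) / (Real.log t : ℂ))) t := by
  have ht0 : t ≠ 0 := by linarith
  have ht0' : (t : ℂ) ≠ 0 := Complex.ofReal_ne_zero.2 ht0
  have hlog : (Real.log t : ℂ) ≠ 0 := Complex.ofReal_ne_zero.2 (Real.log_pos ht).ne'
  have hs1 : s - 1 ≠ 0 := Complex.slitPlane_ne_zero hs
  have hexp : Complex.exp (-((s - 1) * (Real.log t : ℂ))) = (t : ℂ) ^ (-s) * t := by
    calc Complex.exp (-((s - 1) * (Real.log t : ℂ))) = (t : ℂ) ^ (-s + 1) := by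
          rw [Complex.cpow_def_of_ne_zero ht0', Complex.ofReal_log (by linarith)]
          ring_nf
      _ = (t : ℂ) ^ (-s) * t := by rw [Complex.cpow_add _ _ ht0', Complex.cpow_one]
  refine ((hasDerivAt_expIntegralE1 (mul_ofReal_mem_slitPlane hs (Real.log_pos ht))).comp t
    ((Real.hasDerivAt_log ht0).ofReal_comp.const_mul (s - 1))).congr_deriv ?_
  rw [hexp]
  push_cast
  field_simp

lemma integral_ofReal_cpow_div_log {s : ℂ} (hs : s - 1 ∈ Complex.slitPlane) {x : ℝ} (hx : 2 ≤ x) :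
    ∫ t in 2..x, (t : ℂ) ^ (-s) / (Real.log t : ℂ) =
      expIntegralE1 ((s - 1) * (Real.log 2 : ℂ)) - expIntegralE1 ((s - 1) * (Real.log x : ℂ)) := by
  have hsub : uIcc 2 x ⊆ Ici 2 := fun t ht ↦ by rw [uIcc_of_le hx] at ht; exact ht.1
  have hcont : ContinuousOn (fun t : ℝ ↦ (t : ℂ) ^ (-s) / (Real.log t : ℂ)) (Ici 2) :=
    (continuousOn_ofReal_cpow_Ici_two (-s)).div
      (Complex.continuous_ofReal.comp_continuousOn continuousOn_log_Ici_two)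
      fun t ht ↦ Complex.ofReal_ne_zero.2 (log_ne_zero_of_two_le ht)
  have h := intervalIntegral.integral_eq_sub_of_hasDerivAt
    (fun t ht ↦ hasDerivAt_expIntegralE1_mul_log hs (one_lt_two.trans_le (hsub ht)))
    (hcont.mono hsub).intervalIntegrable.neg
  rw [intervalIntegral.integral_neg] at h
  linear_combination -h

/-- The error term `θ(t) - t` of the prime number theorem divided by `log(t)^k`, for use on
`[2, ∞)`. -/
noncomputable def thetaErrorDivLogPow (k : ℕ) (t : ℝ) : ℂ := ((θ t - t) / Real.log t ^ k : ℝ)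

lemma locallyIntegrableOn_thetaErrorDivLogPow (k : ℕ) :
    LocallyIntegrableOn (thetaErrorDivLogPow k) (Ici 2) := by
  refine locallyIntegrableOn_ofReal (LocallyIntegrableOn.mul_continuousOn
    ((theta_mono.locallyIntegrable.sub continuous_id.locallyIntegrable).locallyIntegrableOn _)
    ?_ isClosed_Ici.isLocallyClosed)
  exact (continuousOn_log_Ici_two.pow k).inv₀ fun t ht ↦ pow_ne_zero k (log_ne_zero_of_two_le ht)

lemma isBigO_thetaErrorDivLogPow {a : ℝ} (ha : (fun t ↦ θ t - t) =O[atTop] fun t : ℝ ↦ t ^ a)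
    (k : ℕ) : thetaErrorDivLogPow k =O[atTop] fun t : ℝ ↦ t ^ a := by
  refine Complex.isBigO_ofReal_left.2 (IsBigO.trans (IsBigO.of_bound' ?_) ha)
  filter_upwards [Real.tendsto_log_atTop.eventually_ge_atTop 1] with t ht
  rw [norm_div, norm_pow, Real.norm_of_nonneg (zero_le_one.trans ht)]
  exact div_le_self (norm_nonneg _) (one_le_pow₀ ht)

lemma tendsto_ofReal_cpow_mul_zero {g : ℝ → ℂ} {a : ℝ} (hg : g =O[atTop] fun t : ℝ ↦ t ^ a)
    {s : ℂ} (hs : a < s.re) : Tendsto (fun x : ℝ ↦ (x : ℂ) ^ (-s) * g x) atTop (𝓝 0) := by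
  have hcpow : (fun x : ℝ ↦ (x : ℂ) ^ (-s)) =O[atTop] fun x : ℝ ↦ x ^ (-s.re) := by
    refine IsBigO.of_bound' ?_
    filter_upwards [eventually_gt_atTop 0] with x hx
    rw [Complex.norm_cpow_eq_rpow_re_of_pos hx, Complex.neg_re]
    exact le_abs_self _
  refine ((hcpow.mul hg).congr' EventuallyEq.rfl ?_).trans_tendsto
    (tendsto_rpow_neg_atTop (sub_pos.2 hs))
  filter_upwards [eventually_gt_atTop 0] with x hx
  rw [← Real.rpow_add hx]
  ring_nf

/-- The limit of `∑_{p ≤ x} p^(-s) + E₁((s - 1) log x)`, in the form produced by partial summation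
against `θ`. -/
noncomputable def primeZetaLimit (s : ℂ) : ℂ :=
  expIntegralE1 ((s - 1) * (Real.log 2 : ℂ)) + 2 * ((2 : ℂ) ^ (-s) / (Real.log 2 : ℂ)) +
    (s * mellin (indicator (Ioi 2) (thetaErrorDivLogPow 1)) (-s) +
      mellin (indicator (Ioi 2) (thetaErrorDivLogPow 2)) (-s))

section
variable {s : ℂ} {a : ℝ}

lemma sum_primesBelow_cpow_add_expIntegralE1 (hs : s - 1 ∈ Complex.slitPlane) (hs0 : s ≠ 0) {x : ℝ}
    (hx : 2 ≤ x) :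
    ∑ p ∈ Nat.primesBelow (⌊x⌋₊ + 1), (p : ℂ) ^ (-s) +
        expIntegralE1 ((s - 1) * (Real.log x : ℂ)) =
      expIntegralE1 ((s - 1) * (Real.log 2 : ℂ)) + 2 * ((2 : ℂ) ^ (-s) / (Real.log 2 : ℂ)) +
        (∫ t in 2..x, (t : ℂ) ^ (-s - 1) •
          (s * thetaErrorDivLogPow 1 t + thetaErrorDivLogPow 2 t)) +
        (x : ℂ) ^ (-s) * thetaErrorDivLogPow 1 x := by
  have hlog {p : ℕ} (hp : p ∈ Nat.primesBelow (⌊x⌋₊ + 1)) : (Real.log p : ℂ) ≠ 0 :=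
    Complex.ofReal_ne_zero.2
      (log_ne_zero_of_two_le (mod_cast (Nat.prime_of_mem_primesBelow hp).two_le))
  have hsum : ∑ p ∈ Nat.primesBelow (⌊x⌋₊ + 1), (p : ℂ) ^ (-s) =
      ∑ p ∈ Nat.primesBelow (⌊x⌋₊ + 1),
        (((p : ℝ) : ℂ) ^ (-s) / (Real.log p : ℂ)) * (Real.log p : ℂ) :=
    Finset.sum_congr rfl fun p hp ↦ by rw [div_mul_cancel₀ _ (hlog hp), Complex.ofReal_natCast]
  have hcont : ContinuousOn (fun t : ℝ ↦
      -((t : ℂ) ^ (-s - 1) * (s / (Real.log t : ℂ) + 1 / (Real.log t : ℂ) ^ 2))) (Ici 2) := by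
    have hlogc := Complex.continuous_ofReal.comp_continuousOn continuousOn_log_Ici_two
    have hlog0 (t : ℝ) (ht : t ∈ Ici 2) : (Real.log t : ℂ) ≠ 0 :=
      Complex.ofReal_ne_zero.2 (log_ne_zero_of_two_le ht)
    exact ((continuousOn_ofReal_cpow_Ici_two _).mul ((continuousOn_const.div hlogc hlog0).add
      (continuousOn_const.div (hlogc.pow 2) fun t ht ↦ pow_ne_zero 2 (hlog0 t ht)))).neg
  have hint : ∫ t in 2..x, -((t : ℂ) ^ (-s - 1) *
        (s / (Real.log t : ℂ) + 1 / (Real.log t : ℂ) ^ 2)) * ((θ t - t : ℝ) : ℂ) =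
      -∫ t in 2..x, (t : ℂ) ^ (-s - 1) •
        (s * thetaErrorDivLogPow 1 t + thetaErrorDivLogPow 2 t) := by
    rw [← intervalIntegral.integral_neg]
    congr 1 with t
    simp only [thetaErrorDivLogPow, smul_eq_mul]
    push_cast
    ring
  rw [hsum, sum_primesBelow_mul_log_eq_integral_add hx
    (fun t ht ↦ hasDerivAt_ofReal_cpow_div_log hs0 (one_lt_two.trans_le ht.1))
    (hcont.mono Icc_subset_Ici_self), hint, integral_ofReal_cpow_div_log hs hx]
  simp only [thetaErrorDivLogPow]
  push_cast
  ring

lemma tendsto_sum_primesBelow_cpow_add_expIntegralE1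
    (hθ : (fun t ↦ θ t - t) =O[atTop] fun t : ℝ ↦ t ^ a) (hs : s - 1 ∈ Complex.slitPlane)
    (hs0 : s ≠ 0) (hsa : a < s.re) :
    Tendsto (fun x : ℝ ↦ ∑ p ∈ Nat.primesBelow (⌊x⌋₊ + 1), (p : ℂ) ^ (-s) +
      expIntegralE1 ((s - 1) * (Real.log x : ℂ))) atTop (𝓝 (primeZetaLimit s)) := by
  have hlim (k : ℕ) := tendsto_intervalIntegral_cpow_smul_mellin (s := -s) two_pos
    (locallyIntegrableOn_thetaErrorDivLogPow k) (isBigO_thetaErrorDivLogPow hθ k) (by simpa)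
  have hint (k : ℕ) {x : ℝ} (hx : 2 ≤ x) : IntervalIntegrable
      (fun t : ℝ ↦ (t : ℂ) ^ (-s - 1) • thetaErrorDivLogPow k t) volume 2 x := by
    rw [intervalIntegrable_iff, uIoc_of_le hx]
    exact (((locallyIntegrableOn_thetaErrorDivLogPow k).continuousOn_smul
      isClosed_Ici.isLocallyClosed (continuousOn_ofReal_cpow_Ici_two (-s - 1))
      ).integrableOn_compact_subset Icc_subset_Ici_self isCompact_Icc).mono_set Ioc_subset_Icc_self
  have hsum := (((hlim 1).const_mul s).add (hlim 2)).const_add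
    (expIntegralE1 ((s - 1) * (Real.log 2 : ℂ)) + 2 * ((2 : ℂ) ^ (-s) / (Real.log 2 : ℂ)))
  have hbdry := tendsto_ofReal_cpow_mul_zero (isBigO_thetaErrorDivLogPow hθ 1) hsa
  refine ((hsum.add hbdry).congr' ?_).trans (by rw [add_zero, primeZetaLimit])
  filter_upwards [eventually_ge_atTop 2] with x hx
  rw [sum_primesBelow_cpow_add_expIntegralE1 hs hs0 hx, ← intervalIntegral.integral_const_mul,
    ← intervalIntegral.integral_add ((hint 1 hx).const_mul s) (hint 2 hx)]
  simp only [smul_eq_mul, mul_add, mul_left_comm s]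

lemma differentiableAt_primeZetaLimit (hθ : (fun t ↦ θ t - t) =O[atTop] fun t : ℝ ↦ t ^ a)
    (hs : s - 1 ∈ Complex.slitPlane) (hsa : a < s.re) : DifferentiableAt ℂ primeZetaLimit s := by
  have hmellin (k : ℕ) : DifferentiableAt ℂ
      (fun s ↦ mellin (indicator (Ioi 2) (thetaErrorDivLogPow k)) (-s)) s :=
    (differentiableAt_mellin_indicator_Ioi two_pos (locallyIntegrableOn_thetaErrorDivLogPow k)
      (isBigO_thetaErrorDivLogPow hθ k) (by simpa)).comp s differentiableAt_id.neg
  have hE : DifferentiableAt ℂ (fun s ↦ expIntegralE1 ((s - 1) * (Real.log 2 : ℂ))) s :=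
    DifferentiableAt.comp (g := expIntegralE1) (f := fun s ↦ (s - 1) * (Real.log 2 : ℂ)) s
      (hasDerivAt_expIntegralE1 (mul_ofReal_mem_slitPlane hs
        (Real.log_pos one_lt_two))).differentiableAt (by fun_prop)
  have hcpow : DifferentiableAt ℂ (fun s : ℂ ↦ (2 : ℂ) ^ (-s)) s :=
    differentiableAt_id.neg.const_cpow (Or.inl two_ne_zero)
  exact (hE.add ((hcpow.div_const _).const_mul 2)).add
    ((differentiableAt_id.mul (hmellin 1)).add (hmellin 2))

end

end PartialSummation

section PrimePowers
open Topology Set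

lemma norm_natCast_cpow_neg_add_two_mul_le {m : ℕ} (hm : 2 ≤ m) {b : ℝ} (hb : 0 ≤ b) {w : ℂ}
    (hw : b ≤ w.re) (n : ℕ) :
    ‖(m : ℂ) ^ (-(((n : ℂ) + 2) * w))‖ ≤ (2 ^ (-b)) ^ n * (m : ℝ) ^ (-(2 * b)) := by
  have hm2 : (2 : ℝ) ≤ m := mod_cast hm
  have hm0 : (0 : ℝ) < m := two_pos.trans_le hm2
  have hre : (-(((n : ℂ) + 2) * w)).re = -((n + 2) * w.re) := by simp
  rw [Complex.norm_natCast_cpow_of_pos (by lia), hre]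
  calc (m : ℝ) ^ (-((n + 2) * w.re)) ≤ (m : ℝ) ^ (-b * n + -(2 * b)) :=
        Real.rpow_le_rpow_of_exponent_le (by linarith) (by nlinarith [n.cast_nonneg (α := ℝ)])
    _ = ((m : ℝ) ^ (-b)) ^ n * (m : ℝ) ^ (-(2 * b)) := by
        rw [Real.rpow_add hm0, Real.rpow_mul hm0.le, Real.rpow_natCast]
    _ ≤ (2 ^ (-b)) ^ n * (m : ℝ) ^ (-(2 * b)) := by
        have := Real.rpow_le_rpow_of_nonpos two_pos hm2 (neg_nonpos.2 hb)
        gcongr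

/-- The term `p^(-ms) / m` of the double series for `log ζ(s)`, indexed by `m - 2` and `p` so as to
leave out the primes themselves. -/
noncomputable def primePowerTerm (s : ℂ) (x : ℕ × Nat.Primes) : ℂ :=
  ((x.1 : ℂ) + 2)⁻¹ * ((x.2 : ℕ) : ℂ) ^ (-(((x.1 : ℂ) + 2) * s))

/-- The part `∑_{m ≥ 2} (1/m) ∑_p p^(-ms)` of the double series for `log ζ(s)`. -/
noncomputable def primePowerSeries (s : ℂ) : ℂ :=
  ∑' n : ℕ, ((n : ℂ) + 2)⁻¹ * ∑' p : Nat.Primes, ((p : ℕ) : ℂ) ^ (-(((n : ℂ) + 2) * s))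

lemma norm_primePowerTerm_le {b : ℝ} (hb : 0 ≤ b) {s : ℂ} (hs : b ≤ s.re) (x : ℕ × Nat.Primes) :
    ‖primePowerTerm s x‖ ≤ (2 ^ (-b)) ^ x.1 * ((x.2 : ℕ) : ℝ) ^ (-(2 * b)) := by
  have hinv : ‖((x.1 : ℂ) + 2)⁻¹‖ ≤ 1 := by
    rw [norm_inv]
    refine inv_le_one_of_one_le₀ ?_
    norm_cast
    lia
  rw [primePowerTerm, norm_mul]
  exact (mul_le_of_le_one_left (norm_nonneg _) hinv).trans
    (norm_natCast_cpow_neg_add_two_mul_le x.2.2.two_le hb hs x.1)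

lemma summable_two_rpow_neg_pow_mul_primes_rpow {b : ℝ} (hb : 1 / 2 < b) :
    Summable fun x : ℕ × Nat.Primes ↦ ((2 : ℝ) ^ (-b)) ^ x.1 * ((x.2 : ℕ) : ℝ) ^ (-(2 * b)) := by
  have hgeom : (2 : ℝ) ^ (-b) < 1 := Real.rpow_lt_one_of_one_lt_of_neg one_lt_two (by linarith)
  exact (summable_geometric_of_lt_one (by positivity) hgeom).mul_of_nonneg
    (Nat.Primes.summable_rpow.2 (by linarith)) (fun n ↦ by positivity) fun p ↦ by positivity

lemma summable_primePowerTerm {s : ℂ} (hs : 1 / 2 < s.re) : Summable (primePowerTerm s) :=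
  .of_norm_bounded (summable_two_rpow_neg_pow_mul_primes_rpow hs)
    (norm_primePowerTerm_le (by linarith) le_rfl)

lemma primePowerSeries_eq_tsum_prod {s : ℂ} (hs : 1 / 2 < s.re) :
    primePowerSeries s = ∑' x, primePowerTerm s x := by
  rw [(summable_primePowerTerm hs).tsum_prod]
  simp only [primePowerSeries, primePowerTerm, tsum_mul_left]

lemma differentiableAt_primePowerSeries {s : ℂ} (hs : 1 / 2 < s.re) :
    DifferentiableAt ℂ primePowerSeries s := by
  obtain ⟨b, hb, hbs⟩ := exists_between hs
  have hopen : IsOpen {z : ℂ | b < z.re} := isOpen_lt continuous_const Complex.continuous_re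
  have hterm (x : ℕ × Nat.Primes) : DifferentiableOn ℂ (primePowerTerm · x) {z : ℂ | b < z.re} := by
    have hp : ((x.2 : ℕ) : ℂ) ≠ 0 := mod_cast x.2.2.ne_zero
    exact fun z _ ↦ (DifferentiableAt.const_mul (DifferentiableAt.const_cpow (by fun_prop)
      (Or.inl hp)) _).differentiableWithinAt
  have htsum := Complex.differentiableOn_tsum_of_summable_norm
    (summable_two_rpow_neg_pow_mul_primes_rpow hb) hterm hopen
    fun x z hz ↦ norm_primePowerTerm_le (by linarith) (le_of_lt hz) x
  exact (htsum.congr fun z hz ↦ primePowerSeries_eq_tsum_prod (hb.trans hz)).differentiableAt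
    (hopen.mem_nhds hbs)

lemma summable_primes_cpow_neg {s : ℂ} (hs : 1 < s.re) :
    Summable fun p : Nat.Primes ↦ ((p : ℕ) : ℂ) ^ (-s) := by
  refine .of_norm ((Nat.Primes.summable_rpow.2 (neg_lt_neg hs)).congr fun p ↦ ?_)
  rw [Complex.norm_natCast_cpow_of_pos p.2.pos, Complex.neg_re]

lemma tsum_primes_tsum_eq_add_primePowerSeries {s : ℂ} (hs : 1 < s.re) :
    ∑' p : Nat.Primes, ∑' n : ℕ, (((n : ℂ) + 1) * ((p : ℕ) : ℂ) ^ (((n : ℂ) + 1) * s))⁻¹ =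
      ∑' p : Nat.Primes, ((p : ℕ) : ℂ) ^ (-s) + primePowerSeries s := by
  have hs2 : 1 / 2 < s.re := by linarith
  have hsum : Summable fun x : Nat.Primes × ℕ ↦ primePowerTerm s (x.2, x.1) :=
    (summable_primePowerTerm hs2).prod_symm
  have hinner (p : Nat.Primes) :
      ∑' n : ℕ, (((n : ℂ) + 1) * ((p : ℕ) : ℂ) ^ (((n : ℂ) + 1) * s))⁻¹ =
        ((p : ℕ) : ℂ) ^ (-s) + ∑' n, primePowerTerm s (n, p) := by
    have hshift (n : ℕ) :
        ((((n + 1 : ℕ) : ℂ) + 1) * ((p : ℕ) : ℂ) ^ ((((n + 1 : ℕ) : ℂ) + 1) * s))⁻¹ =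
          primePowerTerm s (n, p) := by
      rw [primePowerTerm, mul_inv, ← Complex.cpow_neg]
      push_cast
      ring_nf
    rw [Summable.tsum_eq_zero_add ((summable_nat_add_iff 1).1
      ((hsum.prod_factor p).congr fun n ↦ (hshift n).symm)), tsum_congr hshift]
    simp [Complex.cpow_neg]
  rw [tsum_congr hinner, (summable_primes_cpow_neg hs).tsum_add hsum.prod,
    primePowerSeries_eq_tsum_prod hs2, ← hsum.tsum_prod,
    ← (Equiv.prodComm Nat.Primes ℕ).tsum_eq (primePowerTerm s)]
  rfl

lemma tendsto_sum_primesBelow_cpow {s : ℂ} (hs : 1 < s.re) :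
    Tendsto (fun x : ℝ ↦ ∑ p ∈ Nat.primesBelow (⌊x⌋₊ + 1), (p : ℂ) ^ (-s)) atTop
      (𝓝 (∑' p : Nat.Primes, ((p : ℕ) : ℂ) ^ (-s))) := by
  have hsum : HasSum (indicator {p : ℕ | p.Prime} fun n ↦ (n : ℂ) ^ (-s))
      (∑' p : Nat.Primes, ((p : ℕ) : ℂ) ^ (-s)) :=
    hasSum_subtype_iff_indicator.1 (summable_primes_cpow_neg hs).hasSum
  refine (hsum.tendsto_sum_nat.comp
    ((tendsto_add_atTop_nat 1).comp tendsto_nat_floor_atTop)).congr fun x ↦ ?_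
  simp only [Function.comp_apply, Nat.primesBelow, Finset.sum_filter, indicator_apply,
    mem_ofPred_eq]

end PrimePowers

section Continuation
open Topology Set Asymptotics Chebyshev

/-- The half-plane `Re z > α` cut along the real axis from `1` to the left. -/
def slitHalfPlane (α : ℝ) : Set ℂ := {z | α < z.re ∧ z - 1 ∈ Complex.slitPlane}

lemma slitRegion_eq_slitHalfPlane : slitRegion = slitHalfPlane (1 / 2) := by
  ext z
  refine and_congr_right fun _ ↦ ?_
  rw [not_iff_comm, Complex.mem_slitPlane_iff, not_or, not_lt, not_not]
  constructor
  · exact fun ⟨hre, him⟩ ↦ ⟨(z - 1).re, hre, Complex.ext rfl him⟩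
  · rintro ⟨r, hr, h⟩
    rw [h]
    exact ⟨hr, Complex.ofReal_im r⟩

lemma isOpen_slitHalfPlane (α : ℝ) : IsOpen (slitHalfPlane α) :=
  (isOpen_lt continuous_const Complex.continuous_re).inter
    (Complex.isOpen_slitPlane.preimage (by fun_prop))

lemma ofReal_mem_slitHalfPlane {α r : ℝ} (hr : 1 < r) (hαr : α < r) :
    (r : ℂ) ∈ slitHalfPlane α :=
  ⟨hαr, mod_cast Complex.ofReal_mem_slitPlane.2 (sub_pos.2 hr)⟩

lemma isPreconnected_slitHalfPlane (α : ℝ) : IsPreconnected (slitHalfPlane α) := by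
  obtain ⟨r, hr⟩ := exists_gt (max 1 α)
  obtain ⟨hr1, hαr⟩ := max_lt_iff.1 hr
  have hslit : StarConvex ℝ (r : ℂ) ((· + (-1)) ⁻¹' Complex.slitPlane) := by
    have hcenter : (r : ℂ) + -1 = ((r - 1 : ℝ) : ℂ) := by push_cast; ring
    refine StarConvex.preimage_add_left ?_
    rw [hcenter]
    exact Complex.starConvex_ofReal_slitPlane (sub_pos.2 hr1)
  have hstar : StarConvex ℝ (r : ℂ) (slitHalfPlane α) :=
    ((convex_halfSpace_re_gt α).starConvex hαr).inter hslit
  exact (hstar.isPathConnected (ofReal_mem_slitHalfPlane hr1 hαr)).isConnected.isPreconnected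

lemma primeZetaLimit_ofReal {a : ℝ} (hθ : (fun t ↦ θ t - t) =O[atTop] fun t : ℝ ↦ t ^ a) {r : ℝ}
    (hr : 1 < r) (har : a < r) :
    primeZetaLimit r = ∑' p : Nat.Primes, ((p : ℕ) : ℂ) ^ (-(r : ℂ)) := by
  have hE : Tendsto (fun x : ℝ ↦ expIntegralE1 (((r : ℂ) - 1) * (Real.log x : ℂ))) atTop (𝓝 0) := by
    refine (tendsto_expIntegralE1_ofReal_atTop.comp
      (Real.tendsto_log_atTop.const_mul_atTop (sub_pos.2 hr))).congr fun x ↦ ?_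
    simp
  refine tendsto_nhds_unique (tendsto_sum_primesBelow_cpow_add_expIntegralE1 hθ
    (ofReal_mem_slitHalfPlane hr har).2 (Complex.ofReal_ne_zero.2 (by linarith)) har) ?_
  simpa using (tendsto_sum_primesBelow_cpow (s := r) hr).add hE

lemma analyticOnNhd_primeZetaLimit {α : ℝ}
    (hθ : ∀ a > α, (fun t ↦ θ t - t) =O[atTop] fun t : ℝ ↦ t ^ a) :
    AnalyticOnNhd ℂ primeZetaLimit (slitHalfPlane α) := by
  refine DifferentiableOn.analyticOnNhd (fun z hz ↦ ?_) (isOpen_slitHalfPlane α)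
  obtain ⟨a, hαa, haz⟩ := exists_between hz.1
  exact (differentiableAt_primeZetaLimit (hθ a hαa) hz.2 haz).differentiableWithinAt

lemma analyticOnNhd_primePowerSeries {α : ℝ} (hα : 1 / 2 ≤ α) :
    AnalyticOnNhd ℂ primePowerSeries (slitHalfPlane α) :=
  DifferentiableOn.analyticOnNhd (fun _ hz ↦
    (differentiableAt_primePowerSeries (hα.trans_lt hz.1)).differentiableWithinAt)
    (isOpen_slitHalfPlane α)

lemma eqOn_slitHalfPlane_of_analyticOnNhd {α : ℝ} {f g : ℂ → ℂ}
    (hf : AnalyticOnNhd ℂ f (slitHalfPlane α)) (hg : AnalyticOnNhd ℂ g (slitHalfPlane α))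
    (hfg : ∀ r : ℝ, 1 < r → α < r → f r = g r) : EqOn f g (slitHalfPlane α) := by
  obtain ⟨r, hr⟩ := exists_gt (max 1 α)
  have hmem : (r : ℂ) ∈ slitHalfPlane α :=
    ofReal_mem_slitHalfPlane (max_lt_iff.1 hr).1 (max_lt_iff.1 hr).2
  refine hf.eqOn_of_preconnected_of_frequently_eq hg (isPreconnected_slitHalfPlane α) hmem ?_
  have hofReal : Tendsto (fun t : ℝ ↦ (t : ℂ)) (𝓝[≠] r) (𝓝[≠] (r : ℂ)) :=
    Complex.continuous_ofReal.continuousAt.tendsto.inf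
      (tendsto_principal_principal.2 fun _ ht ↦ Complex.ofReal_injective.ne ht)
  refine hofReal.frequently (Eventually.frequently ?_)
  filter_upwards [mem_nhdsWithin_of_mem_nhds (Ioi_mem_nhds hr)] with t ht
  exact hfg t (max_lt_iff.1 ht).1 (max_lt_iff.1 ht).2

theorem primeZeta_continuation_general {α : ℝ} (hα : 1 / 2 ≤ α)
    (hζ : ∀ z : ℂ, α < z.re → riemannZeta z ≠ 0) {s : ℂ} (hs : s ∈ slitHalfPlane α) {L : ℂ → ℂ}
    (hL : AnalyticOnNhd ℂ L (slitHalfPlane α))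
    (hLnorm : ∀ z : ℂ, 1 < z.re →
      L z = ∑' p : Nat.Primes,
        ∑' n : ℕ, (((n : ℂ) + 1) * ((p : ℕ) : ℂ) ^ (((n : ℂ) + 1) * z))⁻¹) :
    Tendsto
      (fun x : ℝ ↦ ∑ p ∈ Nat.primesBelow (⌊x⌋₊ + 1), (p : ℂ) ^ (-s) +
        expIntegralE1 ((s - 1) * (Real.log x : ℂ)))
      atTop
      (𝓝 (L s - ∑' n : ℕ, ((n : ℂ) + 2)⁻¹ *
        ∑' p : Nat.Primes, ((p : ℕ) : ℂ) ^ (-(((n : ℂ) + 2) * s)))) := by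
  have hζ₁ (z : ℂ) (hz : α < z.re) : riemannZeta₁ z ≠ 0 := by
    obtain rfl | hz1 := eq_or_ne z 1
    · simp
    · rw [riemannZeta₁_eq_sub_one_mul hz1]
      exact mul_ne_zero (sub_ne_zero.2 hz1) (hζ z hz)
  have hθ (a : ℝ) (ha : α < a) := isBigO_theta_sub_id hα ha hζ₁
  have heq : EqOn primeZetaLimit (L - primePowerSeries) (slitHalfPlane α) := by
    refine eqOn_slitHalfPlane_of_analyticOnNhd (analyticOnNhd_primeZetaLimit hθ)
      (hL.sub (analyticOnNhd_primePowerSeries hα)) fun r hr1 hαr ↦ ?_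
    obtain ⟨a, hαa, har⟩ := exists_between hαr
    rw [primeZetaLimit_ofReal (hθ a hαa) hr1 har, Pi.sub_apply, hLnorm r hr1,
      tsum_primes_tsum_eq_add_primePowerSeries hr1, add_sub_cancel_right]
  have hs0 : s ≠ 0 := fun h ↦ by linarith [hs.1, congrArg Complex.re h, Complex.zero_re]
  obtain ⟨a, hαa, has⟩ := exists_between hs.1
  have hlim := tendsto_sum_primesBelow_cpow_add_expIntegralE1 (hθ a hαa) hs.2 hs0 has
  rwa [heq hs] at hlim

lemma riemannZeta_ne_zero_of_riemannHypothesis (RH : RiemannHypothesis) {s : ℂ}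
    (hs : 1 / 2 < s.re) : riemannZeta s ≠ 0 := by
  intro hs0
  obtain rfl | hs1 := eq_or_ne s 1
  · exact riemannZeta_one_ne_zero hs0
  refine hs.ne' (RH s hs0 ?_ hs1)
  rintro ⟨n, rfl⟩
  have hre : (-2 * ((n : ℂ) + 1)).re = -2 * ((n : ℝ) + 1) := by simp
  rw [hre] at hs
  linarith [n.cast_nonneg (α := ℝ)]

end Continuation

/-- Assuming RH, for `Re(s) > 1/2` with `s - 1` off the nonpositive real axis, the limit
`lim_{x→∞} (∑_{p ≤ x} p^{-s} + E₁((s-1)·log x))` exists and equals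
`log ζ(s) − ∑_{n≥2} (1/n) ∑_{p} p^{-ns}`, where `log ζ` is any analytic branch of the
logarithm of `ζ` on the slit region normalized by the double-sum formula on `Re(s) > 1`;
this analytically continues the prime zeta function. -/
theorem primeZeta_continuation (RH : RiemannHypothesis) (s : ℂ)
    (hs : s ∈ slitRegion) (L : ℂ → ℂ)
    (hL : AnalyticOnNhd ℂ L slitRegion)
    (hLexp : ∀ z ∈ slitRegion, Complex.exp (L z) = riemannZeta z)
    (hLnorm : ∀ z : ℂ, 1 < z.re →
      L z = ∑' p : Nat.Primes,
        ∑' n : ℕ, (((n : ℂ) + 1) * ((p : ℕ) : ℂ) ^ (((n : ℂ) + 1) * z))⁻¹) :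
    Tendsto
      (fun x : ℝ =>
        (∑ p ∈ Nat.primesBelow (⌊x⌋₊ + 1), (p : ℂ) ^ (-s)) +
          expIntegralE1 ((s - 1) * (Real.log x : ℂ)))
      atTop
      (nhds (L s -
        ∑' n : ℕ, ((n : ℂ) + 2)⁻¹ *
          ∑' p : Nat.Primes, ((p : ℕ) : ℂ) ^ (-(((n : ℂ) + 2) * s)))) := by
  rw [slitRegion_eq_slitHalfPlane] at hs hL
  exact primeZeta_continuation_general le_rfl
    (fun _ ↦ riemannZeta_ne_zero_of_riemannHypothesis RH) hs hL hLnorm
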